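/- Existence of continuum spatial waves. Let ω be a regular averaging kernel and let (hf, hg) ∈ 𝒳² satisfy the strictly positive gap condition. Then there exist (0,1)-interpolating functions F, G ∈ Ψ and a real constant α with sgn(α) = sgn(A(hf, hg)) and |α| ≥ |A(hf, hg)|/‖ω‖∞ (where ‖ω‖∞ is the essential supremum of ω), such that G(x) = hg((F ⊗ ω)(x)) and F(x) = hf((G ⊗ ω)(x + α)) for all x ∈ ℝ; equivalently, setting f^t(x) = F(x − αt) and g^t(x) = G(x − αt) for t = 0,1,2,… solves the continuum spatially coupled recursion. -/

import Mathlib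

open MeasureTheory Filter Set

noncomputable section

/-- Convolution `(f ⊗ ω)(x) = ∫ y, f y · ω (x − y)`. -/
def conv (f ω : ℝ → ℝ) (x : ℝ) : ℝ := ∫ y : ℝ, f y * ω (x - y)

/-- `ω` is an averaging kernel: even, nonnegative, of bounded variation, integrating to 1. -/
def IsAveragingKernel (ω : ℝ → ℝ) : Prop :=
  (∀ x, ω (-x) = ω x) ∧ (∀ x, 0 ≤ ω x) ∧ BoundedVariationOn ω Set.univ ∧
    MeasureTheory.Integrable ω ∧ (∫ x : ℝ, ω x) = 1

/-- The essential supremum `‖ω‖∞` of a kernel, as a real number. -/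
def kerSup (ω : ℝ → ℝ) : ℝ := (eLpNorm ω ⊤ MeasureTheory.volume).toReal

/-- `ω` is regular: for some `W ∈ (0,∞]`, it vanishes outside `[−W, W]` and is
positive on `(−W, W)` (the case `W = ∞` being that `ω` is everywhere positive). -/
def IsRegularKernel (ω : ℝ → ℝ) : Prop :=
  (∀ x, 0 < ω x) ∨
    ∃ W : ℝ, 0 < W ∧ (∀ x, W < |x| → ω x = 0) ∧ (∀ x, |x| < W → 0 < ω x)

/-- Membership in `𝒳`: nondecreasing self-maps of `[0,1]`. -/
def MemX (h : ℝ → ℝ) : Prop :=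
  MonotoneOn h (Icc 0 1) ∧ MapsTo h (Icc 0 1) (Icc 0 1)

/-- Left limit `h(u−)` of `h ∈ 𝒳` at `u ∈ [0,1]`, with the convention `h(0−) = 0`. -/
def lm (h : ℝ → ℝ) (u : ℝ) : ℝ := if u ≤ 0 then 0 else sSup (h '' Ico 0 u)

/-- Right limit `h(u+)` of `h ∈ 𝒳` at `u ∈ [0,1]`, with the convention `h(1+) = 1`. -/
def rm (h : ℝ → ℝ) (u : ℝ) : ℝ := if 1 ≤ u then 1 else sInf (h '' Ioc u 1)

/-- A canonical generalized inverse of `h ∈ 𝒳` (any valid inverse has the same integrals,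
so the potential below is unambiguous). -/
def Xinv (h : ℝ → ℝ) (v : ℝ) : ℝ := sInf ({1} ∪ {u ∈ Icc (0:ℝ) 1 | v ≤ h u})

/-- The potential `Φ(hf, hg; u, v) = ∫₀ᵘ hg⁻¹ + ∫₀ᵛ hf⁻¹ − u·v`. -/
def Pot (hf hg : ℝ → ℝ) (u v : ℝ) : ℝ :=
  (∫ x in (0:ℝ)..u, Xinv hg x) + (∫ x in (0:ℝ)..v, Xinv hf x) - u * v

/-- `A(hf, hg) = Φ(hf, hg; 1, 1)`. -/
def Agap (hf hg : ℝ → ℝ) : ℝ := Pot hf hg 1 1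

/-- `(u,v)` is a crossing point of `(hf, hg)`:
`u ∈ [hg(v−), hg(v+)]` and `v ∈ [hf(u−), hf(u+)]`. -/
def IsCrossing (hf hg : ℝ → ℝ) (u v : ℝ) : Prop :=
  u ∈ Icc (0:ℝ) 1 ∧ v ∈ Icc (0:ℝ) 1 ∧
    u ∈ Icc (lm hg v) (rm hg v) ∧ v ∈ Icc (lm hf u) (rm hf u)

/-- The strictly positive gap condition: there is a nontrivial crossing point, and every
nontrivial crossing point satisfies `Φ(hf, hg; u, v) > max {0, A(hf, hg)}`. -/
def StrictPosGap (hf hg : ℝ → ℝ) : Prop :=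
  (∃ u v, IsCrossing hf hg u v ∧ ¬(u = 0 ∧ v = 0) ∧ ¬(u = 1 ∧ v = 1)) ∧
    ∀ u v, IsCrossing hf hg u v → ¬(u = 0 ∧ v = 0) → ¬(u = 1 ∧ v = 1) →
      max 0 (Agap hf hg) < Pot hf hg u v

/-- Membership in `Ψ`: nondecreasing functions `ℝ → [0,1]`. -/
def MemPsi (f : ℝ → ℝ) : Prop := Monotone f ∧ ∀ x, f x ∈ Icc (0:ℝ) 1

/-- `f` is `(a,b)`-interpolating: limits `a` at `−∞` and `b` at `+∞`. -/
def Interpolates (f : ℝ → ℝ) (a b : ℝ) : Prop :=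
  Filter.Tendsto f Filter.atBot (nhds a) ∧ Filter.Tendsto f Filter.atTop (nhds b)

open scoped Topology

/-!
For `δ, K > 0` the stretched recursion `F x = hf ((G ⊗ ω) ((1 + δ) * x))`, truncated to `F = 0` left
of `-K` and `F = 1` right of `K`, has a monotone solution by Knaster–Tarski. Near the place `c`
where it passes the level `v₀` of a nontrivial crossing point it looks like a wave of speed `δ * c`.
Reflection in space exchanges the signs of `c` and of `A(hf, hg)`, so we may assume `c ≤ 0` along a
sequence with `δ → 0` and `δ * K → ∞`.

The identity `Ω(z) + Ω(-z) = 1` for the distribution function `Ω` of `ω` turns the wave equations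
into an energy inequality, bounding the potential at a pair of levels by the interaction of the part
of the profile below these levels with the part above them. As the potential is positive at levels
up to `v₀`, this keeps `δ * c` bounded and forces the Helly limits of the recentred solutions to
interpolate between `0` and `1`. The limits a priori solve only the equations in which the values of
`hf` and `hg` at jumps are free. An actual discrepancy can only occur on a flat piece of the limit,
and the energy inequality, together with an induction along flat pieces, shows that the approximants
are eventually constant there. Finally `A(hf, hg)` is the change of the interaction energy of the
two profiles under a shift by `α`, which determines the sign of `α` and bounds its size.
-/

/-! ### Averaging kernels -/

namespace IsAveragingKernel

variable {ω : ℝ → ℝ}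

theorem even (hω : IsAveragingKernel ω) (x : ℝ) : ω (-x) = ω x := hω.1 x

theorem nonneg (hω : IsAveragingKernel ω) (x : ℝ) : 0 ≤ ω x := hω.2.1 x

theorem integrable (hω : IsAveragingKernel ω) : Integrable ω := hω.2.2.2.1

theorem integral_eq_one (hω : IsAveragingKernel ω) : ∫ x, ω x = 1 := hω.2.2.2.2

theorem exists_forall_le (hω : IsAveragingKernel ω) : ∃ C, ∀ x, ω x ≤ C := by
  refine ⟨ω 0 + (eVariationOn ω univ).toReal, fun x => ?_⟩
  have hdist := hω.2.2.1.dist_le (mem_univ x) (mem_univ 0)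
  rw [Real.dist_eq] at hdist
  linarith [le_abs_self (ω x - ω 0)]

theorem eLpNorm_top_ne_top (hω : IsAveragingKernel ω) : eLpNorm ω ⊤ volume ≠ ⊤ := by
  obtain ⟨C, hC⟩ := hω.exists_forall_le
  refine ne_top_of_le_ne_top (ENNReal.ofReal_ne_top (r := C)) ?_
  rw [eLpNorm_exponent_top]
  refine eLpNormEssSup_le_of_ae_bound (Eventually.of_forall fun x => ?_)
  rw [Real.norm_of_nonneg (hω.nonneg x)]
  exact hC x

theorem ae_le_kerSup (hω : IsAveragingKernel ω) : ∀ᵐ x, ω x ≤ kerSup ω := by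
  filter_upwards [ae_le_eLpNormEssSup (f := ω) (μ := volume)] with x hx
  rw [← eLpNorm_exponent_top] at hx
  rw [← Real.norm_of_nonneg (hω.nonneg x)]
  simpa only [toReal_enorm, kerSup] using ENNReal.toReal_mono hω.eLpNorm_top_ne_top hx

end IsAveragingKernel

theorem kerSup_nonneg {ω : ℝ → ℝ} : 0 ≤ kerSup ω := ENNReal.toReal_nonneg

/-- `ω` vanishes outside `[-W, W]` and is positive on `(-W, W)`: the case of a finite support
radius in the definition of a regular kernel. -/
structure HasRadius (ω : ℝ → ℝ) (W : ℝ) : Prop where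
  radius_pos : 0 < W
  eq_zero : ∀ x, W < |x| → ω x = 0
  pos : ∀ x, |x| < W → 0 < ω x

theorem IsRegularKernel.forall_pos_or_hasRadius {ω : ℝ → ℝ} (hreg : IsRegularKernel ω) :
    (∀ x, 0 < ω x) ∨ ∃ W, HasRadius ω W :=
  hreg.imp_right fun ⟨W, hW, hzero, hpos⟩ => ⟨W, hW, hzero, hpos⟩

/-- The cumulative distribution function `z ↦ ∫_{-∞}^z ω` of a kernel. -/
def kernelCdf (ω : ℝ → ℝ) (z : ℝ) : ℝ := ∫ t in Iic z, ω t

namespace IsAveragingKernel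

variable {ω : ℝ → ℝ}

theorem kernelCdf_sub (hω : IsAveragingKernel ω) (a b : ℝ) :
    kernelCdf ω b - kernelCdf ω a = ∫ t in a..b, ω t :=
  intervalIntegral.integral_Iic_sub_Iic hω.integrable.integrableOn hω.integrable.integrableOn

theorem kernelCdf_mono (hω : IsAveragingKernel ω) : Monotone (kernelCdf ω) := fun a b hab => by
  rw [← sub_nonneg, hω.kernelCdf_sub]
  exact intervalIntegral.integral_nonneg hab fun x _ => hω.nonneg x

theorem kernelCdf_nonneg (hω : IsAveragingKernel ω) (z : ℝ) : 0 ≤ kernelCdf ω z :=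
  setIntegral_nonneg measurableSet_Iic fun x _ => hω.nonneg x

theorem kernelCdf_add_neg (hω : IsAveragingKernel ω) (z : ℝ) :
    kernelCdf ω z + kernelCdf ω (-z) = 1 := by
  have hneg : kernelCdf ω (-z) = ∫ t in Ioi z, ω t := by
    simp only [kernelCdf, ← integral_comp_neg_Ioi z ω, hω.even]
  rw [hneg, kernelCdf, ← hω.integral_eq_one]
  exact intervalIntegral.integral_Iic_add_Ioi hω.integrable.integrableOn
    hω.integrable.integrableOn

theorem kernelCdf_le_one (hω : IsAveragingKernel ω) (z : ℝ) : kernelCdf ω z ≤ 1 := by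
  linarith [hω.kernelCdf_add_neg z, hω.kernelCdf_nonneg (-z)]

theorem kernelCdf_sub_le (hω : IsAveragingKernel ω) {a b : ℝ} (hab : a ≤ b) :
    kernelCdf ω b - kernelCdf ω a ≤ kerSup ω * (b - a) := by
  rw [hω.kernelCdf_sub]
  have hle : ∫ t in a..b, ω t ≤ ∫ _ in a..b, kerSup ω :=
    intervalIntegral.integral_mono_ae hab hω.integrable.intervalIntegrable
      intervalIntegrable_const hω.ae_le_kerSup
  simpa [mul_comm] using hle

theorem continuous_kernelCdf (hω : IsAveragingKernel ω) : Continuous (kernelCdf ω) := by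
  refine LipschitzWith.continuous (K := (kerSup ω).toNNReal)
    (LipschitzWith.of_le_add_mul _ fun x y => ?_)
  rw [Real.dist_eq, Real.coe_toNNReal _ kerSup_nonneg]
  rcases le_total x y with hxy | hyx
  · exact (hω.kernelCdf_mono hxy).trans
      (le_add_of_nonneg_right (mul_nonneg kerSup_nonneg (abs_nonneg _)))
  · rw [abs_of_nonneg (sub_nonneg.2 hyx)]
    linarith [hω.kernelCdf_sub_le hyx]

theorem tendsto_kernelCdf_atTop (hω : IsAveragingKernel ω) :
    Tendsto (kernelCdf ω) atTop (𝓝 1) := by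
  rw [← hω.integral_eq_one]
  exact (aecover_Iic tendsto_id).integral_tendsto_of_countably_generated hω.integrable

theorem tendsto_kernelCdf_atBot (hω : IsAveragingKernel ω) :
    Tendsto (kernelCdf ω) atBot (𝓝 0) := by
  have hsymm : kernelCdf ω = fun z => 1 - kernelCdf ω (-z) := by
    ext z
    linarith [hω.kernelCdf_add_neg z]
  rw [hsymm, ← sub_self 1]
  exact (hω.tendsto_kernelCdf_atTop.comp tendsto_neg_atBot_atTop).const_sub 1

theorem kernelCdf_lt (hω : IsAveragingKernel ω) {a b : ℝ} (hab : a < b)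
    (hpos : ∀ x ∈ Ioo a b, 0 < ω x) : kernelCdf ω a < kernelCdf ω b := by
  rw [← sub_pos, hω.kernelCdf_sub]
  exact intervalIntegral.intervalIntegral_pos_of_pos_on hω.integrable.intervalIntegrable hpos hab

end IsAveragingKernel

theorem HasRadius.kernelCdf_eq_zero {ω : ℝ → ℝ} {W z : ℝ} (hW : HasRadius ω W) (hz : z ≤ -W) :
    kernelCdf ω z = 0 := by
  rw [kernelCdf, integral_Iic_eq_integral_Iio]
  refine setIntegral_eq_zero_of_forall_eq_zero fun x hx => hW.eq_zero x ?_
  linarith [neg_le_abs x, mem_Iio.1 hx]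

/-! ### Monotone functions and their averages -/

theorem ae_continuousAt_sub_of_monotone {f : ℝ → ℝ} (hf : Monotone f) (x : ℝ) :
    ∀ᵐ t, ContinuousAt f (x - t) :=
  (hf.countable_not_continuousAt.preimage (f := fun t => x - t) sub_right_injective).measure_zero
    volume

theorem tendsto_apply_of_monotone {ι : Type*} {l : Filter ι} {fn : ι → ℝ → ℝ} {f : ℝ → ℝ}
    {x : ι → ℝ} {x₀ : ℝ} (hfn : ∀ n, Monotone (fn n))
    (hlim : ∀ y, Tendsto (fun n => fn n y) l (𝓝 (f y))) (hx : Tendsto x l (𝓝 x₀))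
    (hcont : ContinuousAt f x₀) : Tendsto (fun n => fn n (x n)) l (𝓝 (f x₀)) := by
  rw [tendsto_order]
  constructor
  · intro a ha
    obtain ⟨y, hy, hay⟩ :=
      (hcont.continuousWithinAt.eventually (lt_mem_nhds ha)).and self_mem_nhdsWithin
        |>.exists (f := 𝓝[<] x₀)
    filter_upwards [(hlim y).eventually (lt_mem_nhds hy), hx.eventually (lt_mem_nhds hay)]
      with n hn hyn using hn.trans_le (hfn n hyn.le)
  · intro b hb
    obtain ⟨y, hy, hyb⟩ :=
      (hcont.continuousWithinAt.eventually (gt_mem_nhds hb)).and self_mem_nhdsWithin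
        |>.exists (f := 𝓝[>] x₀)
    filter_upwards [(hlim y).eventually (gt_mem_nhds hy), hx.eventually (gt_mem_nhds hyb)]
      with n hn hyn using (hfn n hyn.le).trans_lt hn

/-- The point reflection of the graph of `f` through `(0, 1/2)`; it preserves `Ψ` and exchanges the
roles of the two ends of a wave. -/
def mirror (f : ℝ → ℝ) (x : ℝ) : ℝ := 1 - f (-x)

namespace MemPsi

variable {f : ℝ → ℝ}

theorem monotone (hf : MemPsi f) : Monotone f := hf.1

theorem mem_Icc (hf : MemPsi f) (x : ℝ) : f x ∈ Icc (0 : ℝ) 1 := hf.2 x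

theorem nonneg (hf : MemPsi f) (x : ℝ) : 0 ≤ f x := (hf.2 x).1

theorem le_one (hf : MemPsi f) (x : ℝ) : f x ≤ 1 := (hf.2 x).2

protected theorem const {c : ℝ} (hc : c ∈ Icc (0 : ℝ) 1) : MemPsi fun _ => c :=
  ⟨monotone_const, fun _ => hc⟩

theorem comp_add_const (hf : MemPsi f) (c : ℝ) : MemPsi fun y => f (y + c) :=
  ⟨fun _ _ hab => hf.monotone (by linarith), fun _ => hf.mem_Icc _⟩

protected theorem mirror (hf : MemPsi f) : MemPsi (mirror f) :=
  ⟨fun _ _ hab => sub_le_sub_left (hf.monotone (neg_le_neg hab)) 1, fun _ =>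
    ⟨sub_nonneg.2 (hf.le_one _), sub_le_self 1 (hf.nonneg _)⟩⟩

end MemPsi

protected theorem Interpolates.mirror {f : ℝ → ℝ} {a b : ℝ} (hf : Interpolates f a b) :
    Interpolates (mirror f) (1 - b) (1 - a) :=
  ⟨(hf.2.comp tendsto_neg_atBot_atTop).const_sub 1,
    (hf.1.comp tendsto_neg_atTop_atBot).const_sub 1⟩

theorem conv_eq_integral_sub (f ω : ℝ → ℝ) (x : ℝ) : conv f ω x = ∫ t, f (x - t) * ω t := by
  rw [conv, ← integral_sub_left_eq_self (fun y => f y * ω (x - y)) volume x]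
  simp only [sub_sub_cancel]

theorem conv_congr_ae {f g : ℝ → ℝ} (ω : ℝ → ℝ) (hfg : f =ᵐ[volume] g) : conv f ω = conv g ω := by
  ext x
  refine integral_congr_ae ?_
  filter_upwards [hfg] with t ht
  rw [ht]

theorem conv_comp_add_const (f ω : ℝ → ℝ) (c x : ℝ) :
    conv (fun y => f (y + c)) ω x = conv f ω (x + c) := by
  simp only [conv_eq_integral_sub, sub_add_eq_add_sub]

namespace IsAveragingKernel

variable {ω f g : ℝ → ℝ}

theorem integrable_mul (hω : IsAveragingKernel ω) (hf : MemPsi f) (x : ℝ) :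
    Integrable fun t => f (x - t) * ω t := by
  refine hω.integrable.bdd_mul (c := 1) ?_ (Eventually.of_forall fun t => ?_)
  · exact (hf.monotone.measurable.comp (measurable_const.sub measurable_id)).aestronglyMeasurable
  · rw [Real.norm_of_nonneg (hf.nonneg _)]
    exact hf.le_one _

theorem conv_le_conv (hω : IsAveragingKernel ω) (hf : MemPsi f) (hg : MemPsi g) {x y : ℝ}
    (hle : ∀ t, f (x - t) ≤ g (y - t)) : conv f ω x ≤ conv g ω y := by
  rw [conv_eq_integral_sub, conv_eq_integral_sub]
  exact integral_mono (hω.integrable_mul hf x) (hω.integrable_mul hg y) fun t =>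
    mul_le_mul_of_nonneg_right (hle t) (hω.nonneg t)

theorem conv_const (hω : IsAveragingKernel ω) (c x : ℝ) : conv (fun _ => c) ω x = c := by
  rw [conv_eq_integral_sub, integral_const_mul, hω.integral_eq_one, mul_one]

protected theorem conv (hω : IsAveragingKernel ω) (hf : MemPsi f) : MemPsi (conv f ω) := by
  refine ⟨fun a b hab => hω.conv_le_conv hf hf fun t => hf.monotone (by linarith), fun x => ?_⟩
  rw [mem_Icc, ← hω.conv_const 0 x, ← hω.conv_const 1 x]
  exact ⟨hω.conv_le_conv (.const (by simp)) hf fun t => by simpa using hf.nonneg _,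
    hω.conv_le_conv hf (.const (by simp)) fun t => hf.le_one _⟩

theorem conv_mono (hω : IsAveragingKernel ω) (hf : MemPsi f) : Monotone (conv f ω) :=
  (hω.conv hf).monotone

theorem tendsto_conv_of_ae {ι : Type*} {l : Filter ι} [l.IsCountablyGenerated]
    {fn : ι → ℝ → ℝ} {x : ι → ℝ} {x₀ : ℝ} (hω : IsAveragingKernel ω) (hfn : ∀ n, MemPsi (fn n))
    (hlim : ∀ᵐ t, Tendsto (fun n => fn n (x n - t)) l (𝓝 (f (x₀ - t)))) :
    Tendsto (fun n => conv (fn n) ω (x n)) l (𝓝 (conv f ω x₀)) := by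
  simp only [conv_eq_integral_sub]
  refine tendsto_integral_filter_of_dominated_convergence ω
    (Eventually.of_forall fun n => (hω.integrable_mul (hfn n) (x n)).aestronglyMeasurable)
    (Eventually.of_forall fun n => Eventually.of_forall fun t => ?_) hω.integrable ?_
  · rw [Real.norm_of_nonneg (mul_nonneg ((hfn n).nonneg _) (hω.nonneg t))]
    exact mul_le_of_le_one_left (hω.nonneg t) ((hfn n).le_one _)
  · filter_upwards [hlim] with t ht using ht.mul_const _

theorem tendsto_conv {ι : Type*} {l : Filter ι} [l.IsCountablyGenerated] {fn : ι → ℝ → ℝ}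
    {x : ι → ℝ} {x₀ : ℝ} (hω : IsAveragingKernel ω) (hfn : ∀ n, MemPsi (fn n)) (hf : MemPsi f)
    (hlim : ∀ y, Tendsto (fun n => fn n y) l (𝓝 (f y))) (hx : Tendsto x l (𝓝 x₀)) :
    Tendsto (fun n => conv (fn n) ω (x n)) l (𝓝 (conv f ω x₀)) := by
  refine hω.tendsto_conv_of_ae hfn ?_
  filter_upwards [ae_continuousAt_sub_of_monotone hf.monotone x₀] with t ht
  exact tendsto_apply_of_monotone (fun n => (hfn n).monotone) hlim (hx.sub_const t) ht

theorem continuous_conv (hω : IsAveragingKernel ω) (hf : MemPsi f) : Continuous (conv f ω) :=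
  continuous_iff_continuousAt.2 fun _ =>
    hω.tendsto_conv (fn := fun _ => f) (fun _ => hf) hf (fun _ => tendsto_const_nhds) tendsto_id

theorem tendsto_conv_of_tendsto {l : Filter ℝ} [l.IsCountablyGenerated] {a : ℝ}
    (hω : IsAveragingKernel ω) (hf : MemPsi f) (hl : ∀ t, Tendsto (fun x => x - t) l l)
    (hlim : Tendsto f l (𝓝 a)) : Tendsto (conv f ω) l (𝓝 a) := by
  have h := hω.tendsto_conv_of_ae (fn := fun _ => f) (x := id) (x₀ := 0) (f := fun _ => a)
    (fun _ => hf) (Eventually.of_forall fun t => hlim.comp (hl t))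
  rwa [hω.conv_const] at h

theorem tendsto_conv_atBot (hω : IsAveragingKernel ω) (hf : MemPsi f) {a : ℝ}
    (hlim : Tendsto f atBot (𝓝 a)) : Tendsto (conv f ω) atBot (𝓝 a) :=
  hω.tendsto_conv_of_tendsto hf (fun t => tendsto_atBot_add_const_right _ (-t) tendsto_id) hlim

theorem tendsto_conv_atTop (hω : IsAveragingKernel ω) (hf : MemPsi f) {a : ℝ}
    (hlim : Tendsto f atTop (𝓝 a)) : Tendsto (conv f ω) atTop (𝓝 a) :=
  hω.tendsto_conv_of_tendsto hf (fun t => tendsto_atTop_add_const_right _ (-t) tendsto_id) hlim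

theorem conv_mirror (hω : IsAveragingKernel ω) (hf : MemPsi f) :
    conv (mirror f) ω = mirror (conv f ω) := by
  ext x
  have hflip : ∀ t, f (-x - -t) * ω (-t) = f (-(x - t)) * ω t := fun t => by
    rw [hω.even, show -x - -t = -(x - t) by ring]
  have hint : Integrable fun t => f (-(x - t)) * ω t := by
    simpa only [hflip] using (hω.integrable_mul hf (-x)).comp_neg
  calc conv (mirror f) ω x = ∫ t, (ω t - f (-(x - t)) * ω t) := by
        simp only [conv_eq_integral_sub, mirror, sub_mul, one_mul]
    _ = 1 - ∫ t, f (-x - -t) * ω (-t) := by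
        rw [integral_sub hω.integrable hint, hω.integral_eq_one]
        simp only [hflip]
    _ = mirror (conv f ω) x := by
        rw [integral_neg_eq_self (fun t => f (-x - t) * ω t), mirror, conv_eq_integral_sub]

end IsAveragingKernel

/-! ### One-sided limits and filled graphs -/

theorem one_sub_mem_Icc {u : ℝ} (hu : u ∈ Icc (0 : ℝ) 1) : 1 - u ∈ Icc (0 : ℝ) 1 :=
  ⟨sub_nonneg.2 hu.2, sub_le_self 1 hu.1⟩

theorem lm_zero (h : ℝ → ℝ) : lm h 0 = 0 := if_pos le_rfl

theorem rm_one (h : ℝ → ℝ) : rm h 1 = 1 := if_pos le_rfl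

theorem lm_le {h : ℝ → ℝ} {u c : ℝ} (hc : 0 ≤ c) (hle : ∀ u', 0 ≤ u' → u' < u → h u' ≤ c) :
    lm h u ≤ c := by
  unfold lm
  split_ifs with hu
  · exact hc
  · refine csSup_le ((nonempty_Ico.2 (not_le.1 hu)).image h) ?_
    rintro _ ⟨u', hu', rfl⟩
    exact hle u' hu'.1 hu'.2

theorem le_rm {h : ℝ → ℝ} {u c : ℝ} (hc : c ≤ 1) (hle : ∀ u', u < u' → u' ≤ 1 → c ≤ h u') :
    c ≤ rm h u := by
  unfold rm
  split_ifs with hu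
  · exact hc
  · refine le_csInf ((nonempty_Ioc.2 (not_le.1 hu)).image h) ?_
    rintro _ ⟨u', hu', rfl⟩
    exact hle u' hu'.1 hu'.2

theorem exists_lt_of_lt_lm {h : ℝ → ℝ} {u c : ℝ} (hc : 0 ≤ c) (hlt : c < lm h u) :
    ∃ u', 0 ≤ u' ∧ u' < u ∧ c < h u' := by
  contrapose! hlt
  exact lm_le hc hlt

theorem exists_lt_of_rm_lt {h : ℝ → ℝ} {u c : ℝ} (hc : c ≤ 1) (hlt : rm h u < c) :
    ∃ u', u < u' ∧ u' ≤ 1 ∧ h u' < c := by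
  contrapose! hlt
  exact le_rm hc hlt

/-- The vertical section at `u` of the graph of `h` with its jumps filled in, so that
`IsCrossing hf hg u v` says `u ∈ graphFill hg v` and `v ∈ graphFill hf u` for `u, v ∈ [0,1]`. -/
def graphFill (h : ℝ → ℝ) (u : ℝ) : Set ℝ := Icc (lm h u) (rm h u)

namespace MemX

variable {h : ℝ → ℝ} {u u' : ℝ}

theorem le_lm (hh : MemX h) (hu' : 0 ≤ u') (hlt : u' < u) (hu : u ≤ 1) : h u' ≤ lm h u := by
  rw [lm, if_neg (hu'.trans_lt hlt).not_ge]
  refine le_csSup ⟨1, ?_⟩ ⟨u', ⟨hu', hlt⟩, rfl⟩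
  rintro _ ⟨x, hx, rfl⟩
  exact (hh.2 ⟨hx.1, hx.2.le.trans hu⟩).2

theorem rm_le (hh : MemX h) (hu : 0 ≤ u) (hlt : u < u') (hu' : u' ≤ 1) : rm h u ≤ h u' := by
  rw [rm, if_neg (hlt.trans_le hu').not_ge]
  refine csInf_le ⟨0, ?_⟩ ⟨u', ⟨hlt, hu'⟩, rfl⟩
  rintro _ ⟨x, hx, rfl⟩
  exact (hh.2 ⟨hu.trans hx.1.le, hx.2⟩).1

theorem lm_nonneg (hh : MemX h) (hu : u ≤ 1) : 0 ≤ lm h u := by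
  rcases le_or_gt u 0 with hu₀ | hu₀
  · exact (if_pos hu₀).ge
  · exact (hh.2 ⟨le_rfl, zero_le_one⟩).1.trans (hh.le_lm le_rfl hu₀ hu)

theorem lm_le_one (hh : MemX h) (hu : u ≤ 1) : lm h u ≤ 1 :=
  lm_le zero_le_one fun _ hu'₀ hlt => (hh.2 ⟨hu'₀, hlt.le.trans hu⟩).2

theorem rm_nonneg (hh : MemX h) (hu : 0 ≤ u) : 0 ≤ rm h u :=
  le_rm zero_le_one fun _ hlt hu'₁ => (hh.2 ⟨hu.trans hlt.le, hu'₁⟩).1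

theorem rm_le_one (hh : MemX h) (hu : 0 ≤ u) : rm h u ≤ 1 := by
  rcases le_or_gt 1 u with hu₁ | hu₁
  · exact (if_pos hu₁).le
  · exact (hh.rm_le hu hu₁ le_rfl).trans (hh.2 ⟨zero_le_one, le_rfl⟩).2

theorem self_mem_graphFill (hh : MemX h) (hu : u ∈ Icc (0 : ℝ) 1) : h u ∈ graphFill h u :=
  ⟨lm_le (hh.2 hu).1 fun _ hu'₀ hlt => hh.1 ⟨hu'₀, hlt.le.trans hu.2⟩ hu hlt.le,
    le_rm (hh.2 hu).2 fun _ hlt hu'₁ => hh.1 hu ⟨hu.1.trans hlt.le, hu'₁⟩ hlt.le⟩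

end MemX

/-! ### The generalized inverse -/

theorem bddBelow_Xinv (h : ℝ → ℝ) (v : ℝ) :
    BddBelow ({1} ∪ {u ∈ Icc (0 : ℝ) 1 | v ≤ h u}) :=
  ⟨0, by rintro x (rfl | hx); exacts [zero_le_one, hx.1.1]⟩

theorem Xinv_le {h : ℝ → ℝ} {u v : ℝ} (hu : u ∈ Icc (0 : ℝ) 1) (hv : v ≤ h u) : Xinv h v ≤ u :=
  csInf_le (bddBelow_Xinv h v) (Or.inr ⟨hu, hv⟩)

theorem Xinv_le_one (h : ℝ → ℝ) (v : ℝ) : Xinv h v ≤ 1 :=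
  csInf_le (bddBelow_Xinv h v) (Or.inl rfl)

theorem Xinv_nonneg (h : ℝ → ℝ) (v : ℝ) : 0 ≤ Xinv h v :=
  le_csInf ⟨1, Or.inl rfl⟩ (by rintro x (rfl | hx); exacts [zero_le_one, hx.1.1])

theorem Xinv_mono (h : ℝ → ℝ) : Monotone (Xinv h) := fun a _ hab =>
  csInf_le_csInf (bddBelow_Xinv h a) ⟨1, Or.inl rfl⟩
    (union_subset_union_right _ fun _ hx => ⟨hx.1, hab.trans hx.2⟩)

theorem intervalIntegrable_Xinv (h : ℝ → ℝ) (a b : ℝ) : IntervalIntegrable (Xinv h) volume a b :=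
  (Xinv_mono h).intervalIntegrable

theorem mul_sub_le_integral_Xinv {h : ℝ → ℝ} {a b c : ℝ} (hab : a ≤ b)
    (hle : ∀ x ∈ Ioo a b, c ≤ Xinv h x) : c * (b - a) ≤ ∫ x in a..b, Xinv h x := by
  simpa [mul_comm] using intervalIntegral.integral_mono_on_of_le_Ioo (μ := volume) hab
    intervalIntegrable_const (intervalIntegrable_Xinv h a b) hle

theorem integral_Xinv_le_mul_sub {h : ℝ → ℝ} {a b c : ℝ} (hab : a ≤ b)
    (hle : ∀ x ∈ Ioo a b, Xinv h x ≤ c) : ∫ x in a..b, Xinv h x ≤ c * (b - a) := by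
  simpa [mul_comm] using intervalIntegral.integral_mono_on_of_le_Ioo (μ := volume) hab
    (intervalIntegrable_Xinv h a b) intervalIntegrable_const hle

namespace MemX

variable {h : ℝ → ℝ} {u v x : ℝ}

theorem le_Xinv (hh : MemX h) (hu : u ∈ Icc (0 : ℝ) 1) (hv : h u < v) : u ≤ Xinv h v := by
  refine le_csInf ⟨1, Or.inl rfl⟩ ?_
  rintro x (rfl | ⟨hx, hvx⟩)
  · exact hu.2
  · exact le_of_not_ge fun hxu => (hv.trans_le hvx).not_ge (hh.1 hx hu hxu)

theorem le_Xinv_of_lm_lt (hh : MemX h) (hv : v ≤ 1) (hlt : lm h v < x) : v ≤ Xinv h x := by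
  rcases le_or_gt v 0 with hv₀ | hv₀
  · exact hv₀.trans (Xinv_nonneg _ _)
  refine le_of_forall_lt_imp_le_of_dense fun w hw => ?_
  have hmax : max 0 w < v := max_lt hv₀ hw
  exact (le_max_right 0 w).trans (hh.le_Xinv ⟨le_max_left 0 w, hmax.le.trans hv⟩
    ((hh.le_lm (le_max_left 0 w) hmax hv).trans_lt hlt))

theorem Xinv_le_of_le_rm (hh : MemX h) (hv : 0 ≤ v) (hle : x ≤ rm h v) : Xinv h x ≤ v := by
  rcases le_or_gt 1 v with hv₁ | hv₁
  · exact (Xinv_le_one _ _).trans hv₁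
  refine le_of_forall_gt_imp_ge_of_dense fun w hw => ?_
  have hmin : v < min 1 w := lt_min hv₁ hw
  exact (Xinv_le ⟨hv.trans hmin.le, min_le_left 1 w⟩
    (hle.trans (hh.rm_le hv hmin (min_le_left 1 w)))).trans (min_le_right 1 w)

end MemX

/-! ### The potential -/

/-- The part of the potential `u ↦ Φ(hf, h; u, v)` that depends on `u`. It is convex in `u` and its
minimizers over `[0,1]` are the points of `graphFill h v`. -/
def tiltedPrimitive (h : ℝ → ℝ) (v u : ℝ) : ℝ := (∫ x in (0 : ℝ)..u, Xinv h x) - u * v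

theorem continuous_integral_Xinv (h : ℝ → ℝ) : Continuous fun u => ∫ x in (0 : ℝ)..u, Xinv h x :=
  intervalIntegral.continuous_primitive (intervalIntegrable_Xinv h) 0

theorem tiltedPrimitive_sub (h : ℝ → ℝ) (v a b : ℝ) :
    tiltedPrimitive h v b - tiltedPrimitive h v a = (∫ x in a..b, Xinv h x) - v * (b - a) := by
  rw [tiltedPrimitive, tiltedPrimitive, ← intervalIntegral.integral_add_adjacent_intervals
    (intervalIntegrable_Xinv h 0 a) (intervalIntegrable_Xinv h a b)]
  ring

theorem MemX.tiltedPrimitive_le {h : ℝ → ℝ} {u₀ v₀ : ℝ} (hh : MemX h)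
    (hv₀ : v₀ ∈ Icc (0 : ℝ) 1) (hu₀ : u₀ ∈ graphFill h v₀) (u : ℝ) :
    tiltedPrimitive h v₀ u₀ ≤ tiltedPrimitive h v₀ u := by
  rcases le_total u₀ u with hle | hle
  · have hint := mul_sub_le_integral_Xinv hle fun x hx =>
      hh.le_Xinv_of_lm_lt hv₀.2 (hu₀.1.trans_lt hx.1)
    linarith [tiltedPrimitive_sub h v₀ u₀ u]
  · have hint := integral_Xinv_le_mul_sub hle fun x hx =>
      hh.Xinv_le_of_le_rm hv₀.1 (hx.2.le.trans hu₀.2)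
    linarith [tiltedPrimitive_sub h v₀ u u₀]

theorem MemX.eventually_tiltedPrimitive_lt_of_rm_lt {h : ℝ → ℝ} {u₀ v₀ : ℝ} (hh : MemX h)
    (hu₀ : u₀ ≤ 1) (hv₀ : 0 ≤ v₀) (hlt : rm h v₀ < u₀) :
    ∀ᶠ u in 𝓝[<] u₀, tiltedPrimitive h v₀ u < tiltedPrimitive h v₀ u₀ := by
  obtain ⟨v, hv₀v, hv₁, hvu⟩ := exists_lt_of_rm_lt hu₀ hlt
  filter_upwards [Ioo_mem_nhdsLT hvu] with u hu
  have hint := mul_sub_le_integral_Xinv hu.2.le fun x hx =>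
    hh.le_Xinv ⟨hv₀.trans hv₀v.le, hv₁⟩ (hu.1.trans hx.1)
  have hstrict := mul_lt_mul_of_pos_right hv₀v (sub_pos.2 hu.2)
  linarith [tiltedPrimitive_sub h v₀ u u₀]

theorem eventually_tiltedPrimitive_lt_of_lt_lm {h : ℝ → ℝ} {u₀ v₀ : ℝ} (hu₀ : 0 ≤ u₀)
    (hv₀ : v₀ ≤ 1) (hlt : u₀ < lm h v₀) :
    ∀ᶠ u in 𝓝[>] u₀, tiltedPrimitive h v₀ u < tiltedPrimitive h v₀ u₀ := by
  obtain ⟨v, hv, hvv₀, huv⟩ := exists_lt_of_lt_lm hu₀ hlt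
  filter_upwards [Ioo_mem_nhdsGT huv] with u hu
  have hint := integral_Xinv_le_mul_sub hu.1.le fun x hx =>
    Xinv_le ⟨hv, hvv₀.le.trans hv₀⟩ (hx.2.trans hu.2).le
  have hstrict := mul_lt_mul_of_pos_right hvv₀ (sub_pos.2 hu.1)
  linarith [tiltedPrimitive_sub h v₀ u₀ u]

theorem MemX.mem_graphFill_of_isLocalMinOn {h : ℝ → ℝ} {u₀ v₀ : ℝ} (hh : MemX h)
    (hv₀ : v₀ ∈ Icc (0 : ℝ) 1) (hu₀ : u₀ ∈ Icc (0 : ℝ) 1)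
    (hmin : IsLocalMinOn (tiltedPrimitive h v₀) (Icc 0 1) u₀) : u₀ ∈ graphFill h v₀ := by
  constructor <;> refine le_of_not_gt fun hlt => ?_
  · have hu₁ : u₀ < 1 := hlt.trans_le (hh.lm_le_one hv₀.2)
    have hsub : 𝓝[>] u₀ ≤ 𝓝[Icc 0 1] u₀ :=
      nhdsWithin_le_iff.2 (mem_of_superset (Ioo_mem_nhdsGT hu₁) fun x hx =>
        ⟨hu₀.1.trans hx.1.le, hx.2.le⟩)
    obtain ⟨u, hge, hlt'⟩ := ((hmin.filter_mono hsub).and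
      (eventually_tiltedPrimitive_lt_of_lt_lm hu₀.1 hv₀.2 hlt)).exists
    exact hlt'.not_ge hge
  · have hu₁ : 0 < u₀ := (hh.rm_nonneg hv₀.1).trans_lt hlt
    have hsub : 𝓝[<] u₀ ≤ 𝓝[Icc 0 1] u₀ :=
      nhdsWithin_le_iff.2 (mem_of_superset (Ioo_mem_nhdsLT hu₁) fun x hx =>
        ⟨hx.1.le, hx.2.le.trans hu₀.2⟩)
    obtain ⟨u, hge, hlt'⟩ := ((hmin.filter_mono hsub).and
      (hh.eventually_tiltedPrimitive_lt_of_rm_lt hu₀.2 hv₀.1 hlt)).exists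
    exact hlt'.not_ge hge

theorem Pot_eq_tiltedPrimitive (hf hg : ℝ → ℝ) (u v : ℝ) :
    Pot hf hg u v = tiltedPrimitive hg v u + ∫ x in (0 : ℝ)..v, Xinv hf x := by
  rw [Pot, tiltedPrimitive]
  ring

theorem Pot_swap (hf hg : ℝ → ℝ) (u v : ℝ) : Pot hf hg u v = Pot hg hf v u := by
  rw [Pot, Pot]
  ring

theorem continuous_Pot (hf hg : ℝ → ℝ) : Continuous fun p : ℝ × ℝ => Pot hf hg p.1 p.2 :=
  (((continuous_integral_Xinv hg).comp continuous_fst).add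
    ((continuous_integral_Xinv hf).comp continuous_snd)).sub (continuous_fst.mul continuous_snd)

theorem tendsto_Pot {ι : Type*} {l : Filter ι} {U V : ι → ℝ} {u v : ℝ} (hf hg : ℝ → ℝ)
    (hU : Tendsto U l (𝓝 u)) (hV : Tendsto V l (𝓝 v)) :
    Tendsto (fun i => Pot hf hg (U i) (V i)) l (𝓝 (Pot hf hg u v)) :=
  ((((continuous_integral_Xinv hg).tendsto u).comp hU).add
    (((continuous_integral_Xinv hf).tendsto v).comp hV)).sub (hU.mul hV)

theorem IsCrossing.swap {hf hg : ℝ → ℝ} {u v : ℝ} (hc : IsCrossing hf hg u v) :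
    IsCrossing hg hf v u :=
  ⟨hc.2.1, hc.1, hc.2.2.2, hc.2.2.1⟩

theorem IsCrossing.Pot_le {hf hg : ℝ → ℝ} {u v : ℝ} (hhg : MemX hg)
    (hc : IsCrossing hf hg u v) (u' : ℝ) : Pot hf hg u v ≤ Pot hf hg u' v := by
  rw [Pot_eq_tiltedPrimitive, Pot_eq_tiltedPrimitive]
  linarith [hhg.tiltedPrimitive_le hc.2.1 hc.2.2.1 u']

namespace StrictPosGap

variable {hf hg : ℝ → ℝ}

theorem swap (hgap : StrictPosGap hf hg) : StrictPosGap hg hf := by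
  obtain ⟨⟨u, v, hc, h₀, h₁⟩, hpot⟩ := hgap
  refine ⟨⟨v, u, hc.swap, fun h => h₀ h.symm, fun h => h₁ h.symm⟩, fun u v hc h₀ h₁ => ?_⟩
  rw [Agap, Pot_swap hg hf, Pot_swap hg hf]
  exact hpot v u hc.swap (fun h => h₀ h.symm) (fun h => h₁ h.symm)

theorem crossing_mem_Ioo {u v : ℝ} (hgap : StrictPosGap hf hg) (hhg : MemX hg)
    (hc : IsCrossing hf hg u v) (h₀ : ¬(u = 0 ∧ v = 0)) (h₁ : ¬(u = 1 ∧ v = 1)) :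
    v ∈ Ioo (0 : ℝ) 1 := by
  obtain ⟨hpos, hA⟩ := max_lt_iff.1 (hgap.2 u v hc h₀ h₁)
  refine ⟨hc.2.1.1.lt_of_ne ?_, hc.2.1.2.lt_of_ne ?_⟩ <;> rintro rfl
  · have hle := hc.Pot_le hhg 0
    simp only [Pot, intervalIntegral.integral_same, mul_zero, add_zero, sub_zero] at hle hpos
    exact hpos.not_ge hle
  · exact hA.not_ge (hc.Pot_le hhg 1)

end StrictPosGap

/-- `v₀` is the second coordinate of a nontrivial crossing point of a pair `(hf, hg) ∈ 𝒳²` that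
satisfies the strictly positive gap condition. It serves as the reference level at which the
approximate waves are centred. -/
structure CrossingLevel (hf hg : ℝ → ℝ) (v₀ : ℝ) : Prop where
  memX_f : MemX hf
  memX_g : MemX hg
  gap : StrictPosGap hf hg
  mem_Ioo : v₀ ∈ Ioo (0 : ℝ) 1
  exists_crossing : ∃ u, IsCrossing hf hg u v₀

theorem StrictPosGap.exists_crossingLevel {hf hg : ℝ → ℝ} (hgap : StrictPosGap hf hg)
    (hhf : MemX hf) (hhg : MemX hg) : ∃ v₀, CrossingLevel hf hg v₀ := by
  obtain ⟨u, v₀, hc, h₀, h₁⟩ := hgap.1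
  exact ⟨v₀, hhf, hhg, hgap, hgap.crossing_mem_Ioo hhg hc h₀ h₁, u, hc⟩

namespace CrossingLevel

variable {hf hg : ℝ → ℝ} {v₀ u v : ℝ}

theorem Pot_pos_of_isCrossing (H : CrossingLevel hf hg v₀) (hc : IsCrossing hf hg u v)
    (hv : v ∈ Ioo (0 : ℝ) 1) : 0 < Pot hf hg u v :=
  (le_max_left _ _).trans_lt
    (H.gap.2 u v hc (fun h => hv.1.ne' h.2) (fun h => hv.2.ne h.2))

theorem Pot_pos_of_isMinOn (H : CrossingLevel hf hg v₀) (hu : u ∈ Icc (0 : ℝ) 1)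
    (hv : v ∈ Ioc 0 v₀)
    (hmin : ∀ u' ∈ Icc (0 : ℝ) 1, ∀ v' ∈ Icc 0 v₀, Pot hf hg u v ≤ Pot hf hg u' v') :
    0 < Pot hf hg u v := by
  rcases hv.2.eq_or_lt with rfl | hlt
  · obtain ⟨us, hc⟩ := H.exists_crossing
    exact (H.Pot_pos_of_isCrossing hc H.mem_Ioo).trans_le (hc.Pot_le H.memX_g u)
  have hv₁ : v < 1 := hlt.trans H.mem_Ioo.2
  have hv01 : v ∈ Icc (0 : ℝ) 1 := ⟨hv.1.le, hv₁.le⟩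
  refine H.Pot_pos_of_isCrossing ⟨hu, hv01, ?_, ?_⟩ ⟨hv.1, hv₁⟩
  · refine H.memX_g.mem_graphFill_of_isLocalMinOn hv01 hu (IsMinOn.localize fun u' hu' => ?_)
    have hle := hmin u' hu' v ⟨hv.1.le, hlt.le⟩
    rw [Pot_eq_tiltedPrimitive, Pot_eq_tiltedPrimitive] at hle
    exact le_of_add_le_add_right hle
  · refine H.memX_f.mem_graphFill_of_isLocalMinOn hu hv01 ?_
    have hnear : ∀ᶠ v' in 𝓝[Icc 0 1] v, v' ∈ Ioo 0 v₀ :=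
      nhdsWithin_le_nhds (Ioo_mem_nhds hv.1 hlt)
    filter_upwards [hnear] with v' hv'
    have hle := hmin u hu v' (Ioo_subset_Icc_self hv')
    rw [Pot_swap, Pot_swap _ _ u, Pot_eq_tiltedPrimitive, Pot_eq_tiltedPrimitive] at hle
    exact le_of_add_le_add_right hle

theorem Pot_pos (H : CrossingLevel hf hg v₀) (hu : u ∈ Icc (0 : ℝ) 1) (hv : v ∈ Ioc 0 v₀) :
    0 < Pot hf hg u v := by
  have hcpt : IsCompact (Icc (0 : ℝ) 1 ×ˢ Icc 0 v₀) := isCompact_Icc.prod isCompact_Icc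
  have hne : (Icc (0 : ℝ) 1 ×ˢ Icc 0 v₀).Nonempty := ⟨(u, v), hu, Ioc_subset_Icc_self hv⟩
  obtain ⟨⟨u₁, v₁⟩, ⟨hu₁, hv₁⟩, hmin'⟩ :=
    hcpt.exists_isMinOn hne (continuous_Pot hf hg).continuousOn
  have hmin : ∀ u' ∈ Icc (0 : ℝ) 1, ∀ v' ∈ Icc 0 v₀, Pot hf hg u₁ v₁ ≤ Pot hf hg u' v' :=
    fun u' hu' v' hv' => hmin' (mk_mem_prod hu' hv')
  have hle := hmin u hu v (Ioc_subset_Icc_self hv)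
  rcases hv₁.1.eq_or_lt with hzero | hpos
  · have hnonneg : 0 ≤ Pot hf hg u₁ v₁ := by
      rw [← show (0 : ℝ) = v₁ from hzero, Pot, intervalIntegral.integral_same]
      linarith [intervalIntegral.integral_nonneg (μ := volume) hu₁.1 fun x _ => Xinv_nonneg hg x]
    by_contra! hneg
    exact hneg.not_gt (H.Pot_pos_of_isMinOn hu hv fun u' hu' v' hv' =>
      hneg.trans (hnonneg.trans (hmin u' hu' v' hv')))
  · exact (H.Pot_pos_of_isMinOn hu₁ ⟨hpos, hv₁.2⟩ hmin).trans_le hle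

end CrossingLevel

theorem MemX.Pot_nonpos_of_le_rm_zero {hf hg : ℝ → ℝ} {u v w : ℝ} (hhg : MemX hg)
    (hu : u ∈ Icc (0 : ℝ) 1) (hv : v ∈ Icc 0 (hf u)) (huw : u ≤ w) (hw : w ≤ rm hg 0) :
    Pot hf hg w v ≤ 0 := by
  have hg_le := integral_Xinv_le_mul_sub (hu.1.trans huw) fun x hx =>
    hhg.Xinv_le_of_le_rm le_rfl (hx.2.le.trans hw)
  have hf_le := integral_Xinv_le_mul_sub hv.1 fun x hx => Xinv_le hu (hx.2.le.trans hv.2)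
  have hmul := mul_le_mul_of_nonneg_right huw hv.1
  rw [Pot]
  linarith

theorem StrictPosGap.rm_zero {hf hg : ℝ → ℝ} (hgap : StrictPosGap hf hg) (hhf : MemX hf)
    (hhg : MemX hg) : rm hg 0 = 0 := by
  by_contra hne
  have hpos : 0 < rm hg 0 := (hhg.rm_nonneg le_rfl).lt_of_ne' hne
  have hle_one : rm hg 0 ≤ 1 := hhg.rm_le_one le_rfl
  by_cases hex : ∃ u, 0 ≤ u ∧ u < rm hg 0 ∧ 0 < hf u
  · obtain ⟨u, hu, hlt, hfu⟩ := hex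
    obtain ⟨v₀, H⟩ := hgap.exists_crossingLevel hhf hhg
    have hmin : 0 < min (hf u) v₀ := lt_min hfu H.mem_Ioo.1
    exact (H.Pot_pos ⟨hpos.le, hle_one⟩ ⟨hmin, min_le_right _ _⟩).not_ge
      (hhg.Pot_nonpos_of_le_rm_zero ⟨hu, hlt.le.trans hle_one⟩ ⟨hmin.le, min_le_left _ _⟩
        hlt.le le_rfl)
  · push Not at hex
    have hcross : IsCrossing hf hg (rm hg 0) 0 :=
      ⟨⟨hpos.le, hle_one⟩, ⟨le_rfl, zero_le_one⟩, ⟨(lm_zero hg).trans_le hpos.le, le_rfl⟩,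
        lm_le le_rfl hex, hhf.rm_nonneg hpos.le⟩
    exact lt_irrefl _ (hgap.crossing_mem_Ioo hhg hcross (fun h => hne h.1)
      (fun h => zero_ne_one h.2)).1

/-! ### Duality -/

/-- The dual `u ↦ 1 - h (1 - u)` of `h ∈ 𝒳`: mirroring a wave for `(hf, hg)` gives a wave for the
dual pair. -/
def dual (h : ℝ → ℝ) (u : ℝ) : ℝ := 1 - h (1 - u)

@[simp]
theorem dual_dual (h : ℝ → ℝ) : dual (dual h) = h := by
  ext u
  simp [dual]

protected theorem MemX.dual {h : ℝ → ℝ} (hh : MemX h) : MemX (dual h) :=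
  ⟨fun _ ha _ hb hab => sub_le_sub_left
    (hh.1 (one_sub_mem_Icc hb) (one_sub_mem_Icc ha) (sub_le_sub_left hab 1)) 1,
    fun _ ha => one_sub_mem_Icc (hh.2 (one_sub_mem_Icc ha))⟩

theorem MemX.lm_dual {h : ℝ → ℝ} {u : ℝ} (hh : MemX h) (hu : u ∈ Icc (0 : ℝ) 1) :
    lm (dual h) u = 1 - rm h (1 - u) := by
  have hu' := one_sub_mem_Icc hu
  refine le_antisymm (lm_le (sub_nonneg.2 (hh.rm_le_one hu'.1)) fun x hx hxu => ?_) ?_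
  · exact sub_le_sub_left (hh.rm_le hu'.1 (by linarith) (by linarith)) 1
  · rw [sub_le_comm]
    refine le_rm (sub_le_self 1 (hh.dual.lm_nonneg hu.2)) fun x hux hx => ?_
    have hle := hh.dual.le_lm (u' := 1 - x) (sub_nonneg.2 hx) (by linarith) hu.2
    rw [dual, sub_sub_cancel] at hle
    linarith

theorem MemX.rm_dual {h : ℝ → ℝ} {u : ℝ} (hh : MemX h) (hu : u ∈ Icc (0 : ℝ) 1) :
    rm (dual h) u = 1 - lm h (1 - u) := by
  have hlm := hh.dual.lm_dual (one_sub_mem_Icc hu)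
  rw [dual_dual, sub_sub_cancel] at hlm
  linarith

theorem MemX.one_sub_mem_graphFill_dual {h : ℝ → ℝ} {u v : ℝ} (hh : MemX h)
    (hu : u ∈ Icc (0 : ℝ) 1) (hv : v ∈ graphFill h u) : 1 - v ∈ graphFill (dual h) (1 - u) := by
  rw [graphFill, hh.lm_dual (one_sub_mem_Icc hu), hh.rm_dual (one_sub_mem_Icc hu), sub_sub_cancel]
  exact ⟨sub_le_sub_left hv.2 1, sub_le_sub_left hv.1 1⟩

theorem ae_eq_of_interlacing {p r : ℝ → ℝ} (hp : Monotone p) (hpr : ∀ x y, x < y → p x ≤ r y)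
    (hrp : ∀ x y, x < y → r x ≤ p y) : r =ᵐ[volume] p := by
  have hcont : ∀ᵐ x, ContinuousAt p x := hp.countable_not_continuousAt.measure_zero volume
  filter_upwards [hcont] with x hx
  exact le_antisymm
    (ge_of_tendsto (hx.mono_left nhdsWithin_le_nhds : Tendsto p (𝓝[>] x) _)
      (eventually_mem_nhdsWithin.mono fun y hy => hrp x y hy))
    (le_of_tendsto (hx.mono_left nhdsWithin_le_nhds : Tendsto p (𝓝[<] x) _)
      (eventually_mem_nhdsWithin.mono fun y hy => hpr y x hy))

theorem MemX.Xinv_dual_ae {h : ℝ → ℝ} (hh : MemX h) :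
    (fun v => 1 - Xinv h (1 - v)) =ᵐ[volume] Xinv (dual h) := by
  refine ae_eq_of_interlacing (Xinv_mono _) (fun v v' hvv' => ?_) fun v v' hvv' => ?_
  · refine (Xinv_mono _ hvv'.le).trans ?_
    refine le_of_forall_lt_imp_le_of_dense fun y hy => ?_
    rcases lt_or_ge y 0 with hy₀ | hy₀
    · exact hy₀.le.trans (sub_nonneg.2 (Xinv_le_one _ _))
    have hy01 : y ∈ Icc (0 : ℝ) 1 := ⟨hy₀, hy.le.trans (Xinv_le_one _ _)⟩
    have hlt : dual h y < v' := lt_of_not_ge fun hge => (Xinv_le hy01 hge).not_gt hy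
    exact le_sub_comm.1 (Xinv_le (one_sub_mem_Icc hy01) (by rw [dual] at hlt; linarith))
  · refine le_of_forall_gt_imp_ge_of_dense fun y hy => ?_
    rcases lt_or_ge 1 y with hy₁ | hy₁
    · exact (sub_le_self 1 (Xinv_nonneg _ _)).trans hy₁.le
    have hy01 : y ∈ Icc (0 : ℝ) 1 := ⟨(Xinv_nonneg _ _).trans hy.le, hy₁⟩
    have hle : v' ≤ dual h y := le_of_not_gt fun hlt => (hh.dual.le_Xinv hy01 hlt).not_gt hy
    exact sub_le_comm.1 (hh.le_Xinv (one_sub_mem_Icc hy01) (by rw [dual] at hle; linarith))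

theorem MemX.integral_Xinv_dual {h : ℝ → ℝ} (hh : MemX h) (u : ℝ) :
    ∫ x in (0 : ℝ)..u, Xinv (dual h) x =
      u - ((∫ x in (0 : ℝ)..1, Xinv h x) - ∫ x in (0 : ℝ)..(1 - u), Xinv h x) := by
  have hanti : Antitone fun x => Xinv h (1 - x) := fun a b hab =>
    Xinv_mono h (sub_le_sub_left hab 1)
  calc ∫ x in (0 : ℝ)..u, Xinv (dual h) x
      = ∫ x in (0 : ℝ)..u, (1 - Xinv h (1 - x)) := by
        refine intervalIntegral.integral_congr_ae ?_
        filter_upwards [hh.Xinv_dual_ae] with v hv _ using hv.symm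
    _ = u - ∫ x in (1 - u)..1, Xinv h x := by
        rw [intervalIntegral.integral_sub intervalIntegrable_const hanti.intervalIntegrable,
          intervalIntegral.integral_comp_sub_left (Xinv h)]
        simp
    _ = _ := by
        rw [← intervalIntegral.integral_add_adjacent_intervals
          (intervalIntegrable_Xinv h 0 (1 - u)) (intervalIntegrable_Xinv h (1 - u) 1),
          add_sub_cancel_left]

theorem Pot_dual {hf hg : ℝ → ℝ} (hhf : MemX hf) (hhg : MemX hg) (u v : ℝ) :
    Pot (dual hf) (dual hg) u v = Pot hf hg (1 - u) (1 - v) - Agap hf hg := by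
  rw [Agap, Pot, Pot, Pot, hhf.integral_Xinv_dual, hhg.integral_Xinv_dual]
  ring

theorem Agap_dual {hf hg : ℝ → ℝ} (hhf : MemX hf) (hhg : MemX hg) :
    Agap (dual hf) (dual hg) = -Agap hf hg := by
  rw [Agap, Pot_dual hhf hhg]
  simp [Pot]

protected theorem IsCrossing.dual {hf hg : ℝ → ℝ} {u v : ℝ} (hc : IsCrossing hf hg u v)
    (hhf : MemX hf) (hhg : MemX hg) : IsCrossing (dual hf) (dual hg) (1 - u) (1 - v) :=
  ⟨one_sub_mem_Icc hc.1, one_sub_mem_Icc hc.2.1, hhg.one_sub_mem_graphFill_dual hc.2.1 hc.2.2.1,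
    hhf.one_sub_mem_graphFill_dual hc.1 hc.2.2.2⟩

protected theorem StrictPosGap.dual {hf hg : ℝ → ℝ} (hgap : StrictPosGap hf hg)
    (hhf : MemX hf) (hhg : MemX hg) : StrictPosGap (dual hf) (dual hg) := by
  obtain ⟨⟨u, v, hc, h₀, h₁⟩, hpot⟩ := hgap
  refine ⟨⟨1 - u, 1 - v, hc.dual hhf hhg, fun h => h₁ ⟨by linarith [h.1], by linarith [h.2]⟩,
    fun h => h₀ ⟨by linarith [h.1], by linarith [h.2]⟩⟩, fun u v hc h₀ h₁ => ?_⟩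
  have hc' := hc.dual hhf.dual hhg.dual
  rw [dual_dual, dual_dual] at hc'
  have hlt := max_lt_iff.1 (hpot _ _ hc' (fun h => h₁ ⟨by linarith [h.1], by linarith [h.2]⟩)
    fun h => h₀ ⟨by linarith [h.1], by linarith [h.2]⟩)
  rw [Pot_dual hhf hhg, Agap_dual hhf hhg, max_lt_iff]
  exact ⟨sub_pos.2 hlt.2, by linarith [hlt.1]⟩

protected theorem CrossingLevel.dual {hf hg : ℝ → ℝ} {v₀ : ℝ} (H : CrossingLevel hf hg v₀) :
    CrossingLevel (dual hf) (dual hg) (1 - v₀) where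
  memX_f := H.memX_f.dual
  memX_g := H.memX_g.dual
  gap := H.gap.dual H.memX_f H.memX_g
  mem_Ioo := ⟨sub_pos.2 H.mem_Ioo.2, sub_lt_self 1 H.mem_Ioo.1⟩
  exists_crossing := H.exists_crossing.imp' _ fun _ hc => hc.dual H.memX_f H.memX_g

theorem StrictPosGap.lm_one {hf hg : ℝ → ℝ} (hgap : StrictPosGap hf hg) (hhf : MemX hf)
    (hhg : MemX hg) : lm hg 1 = 1 := by
  have hrm := (hgap.dual hhf hhg).rm_zero hhf.dual hhg.dual
  rw [hhg.rm_dual ⟨le_rfl, zero_le_one⟩, sub_zero] at hrm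
  linarith

/-! ### Quantiles and the energy inequality -/

/-- A member of `Ψ` that is `(0,1)`-interpolating, i.e. a distribution function up to its values
at its jumps. -/
structure IsProfile (f : ℝ → ℝ) : Prop where
  memPsi : MemPsi f
  interpolates : Interpolates f 0 1

/-- The quantile function `inf {x | v ≤ f x}` of a profile, its spatial inverse. It is only
meaningful for `v ∈ (0,1)`: elsewhere the infimum may be that of an empty or unbounded set. -/
def quantile (f : ℝ → ℝ) (v : ℝ) : ℝ := sInf {x | v ≤ f x}

namespace IsProfile

variable {f : ℝ → ℝ} {v x : ℝ}

theorem mirror (hf : IsProfile f) : IsProfile (mirror f) :=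
  ⟨hf.memPsi.mirror, by simpa using hf.interpolates.mirror⟩

theorem bddBelow_superlevel (hf : IsProfile f) (hv : 0 < v) : BddBelow {x | v ≤ f x} := by
  obtain ⟨x, hx⟩ := ((tendsto_order.1 hf.interpolates.1).2 v hv).exists
  exact ⟨x, fun y hy => (hf.memPsi.monotone.reflect_lt (hx.trans_le hy)).le⟩

theorem nonempty_superlevel (hf : IsProfile f) (hv : v < 1) : {x | v ≤ f x}.Nonempty :=
  ((tendsto_order.1 hf.interpolates.2).1 v hv).exists.imp fun _ => le_of_lt

theorem quantile_le (hf : IsProfile f) (hv : v ∈ Ioo (0 : ℝ) 1) (h : v ≤ f x) :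
    quantile f v ≤ x :=
  csInf_le (hf.bddBelow_superlevel hv.1) h

theorem le_quantile (hf : IsProfile f) (hv : v ∈ Ioo (0 : ℝ) 1) (h : f x < v) :
    x ≤ quantile f v :=
  le_csInf (hf.nonempty_superlevel hv.2) fun _ hy =>
    (hf.memPsi.monotone.reflect_lt (h.trans_le hy)).le

theorem le_of_quantile_lt (hf : IsProfile f) (hv : v ∈ Ioo (0 : ℝ) 1) (h : quantile f v < x) :
    v ≤ f x :=
  not_lt.1 fun hlt => (hf.le_quantile hv hlt).not_gt h

theorem lt_of_lt_quantile (hf : IsProfile f) (hv : v ∈ Ioo (0 : ℝ) 1) (h : x < quantile f v) :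
    f x < v :=
  not_le.1 fun hle => (hf.quantile_le hv hle).not_gt h

theorem quantile_le_of_mem_Ioo (hf : IsProfile f) (hv : v ∈ Ioo 0 (f x)) : quantile f v ≤ x :=
  hf.quantile_le ⟨hv.1, hv.2.trans_le (hf.memPsi.le_one x)⟩ hv.2.le

theorem le_quantile_of_mem_Ioo (hf : IsProfile f) (hv : v ∈ Ioo (f x) 1) : x ≤ quantile f v :=
  hf.le_quantile ⟨(hf.memPsi.nonneg x).trans_lt hv.1, hv.2⟩ hv.1

theorem monotoneOn_quantile (hf : IsProfile f) : MonotoneOn (quantile f) (Ioo 0 1) :=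
  fun _ ha _ hb hab => csInf_le_csInf (hf.bddBelow_superlevel ha.1) (hf.nonempty_superlevel hb.2)
    fun _ hx => hab.trans hx

theorem aemeasurable_quantile (hf : IsProfile f) :
    AEMeasurable (quantile f) (volume.restrict (Ioo 0 1)) :=
  aemeasurable_restrict_of_monotoneOn measurableSet_Ioo hf.monotoneOn_quantile

end IsProfile

theorem MemPsi.integral_ite_le {f : ℝ → ℝ} (hf : MemPsi f) (x c : ℝ) :
    ∫ v in Ioo (0 : ℝ) 1, (if v ≤ f x then c else 0) = f x * c := by
  have hset : (Ioo (0 : ℝ) 1 ∩ Iic (f x) : Set ℝ) =ᵐ[volume] Ioc 0 (f x) := by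
    filter_upwards [Measure.ae_ne volume 1] with v hv
    refine propext ⟨fun h => ⟨h.1.1, h.2⟩, fun h => ⟨⟨h.1, ?_⟩, h.2⟩⟩
    exact lt_of_le_of_ne (h.2.trans (hf.le_one x)) hv
  calc ∫ v in Ioo (0 : ℝ) 1, (if v ≤ f x then c else 0)
      = ∫ v in Ioo (0 : ℝ) 1, (Iic (f x)).indicator (fun _ => c) v := rfl
    _ = f x * c := by
      rw [setIntegral_indicator measurableSet_Iic, setIntegral_congr_set hset, setIntegral_const,
        Real.volume_real_Ioc_of_le (hf.nonneg x), sub_zero, smul_eq_mul]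

theorem IsProfile.integral_ite_le_eq_kernelCdf {f : ℝ → ℝ} (hf : IsProfile f) (ω : ℝ → ℝ)
    {v : ℝ} (hv : v ∈ Ioo (0 : ℝ) 1) (x : ℝ) :
    ∫ t, (if v ≤ f (x - t) then ω t else 0) = kernelCdf ω (x - quantile f v) := by
  rw [kernelCdf, ← integral_indicator measurableSet_Iic]
  refine integral_congr_ae ?_
  filter_upwards [Measure.ae_ne volume (x - quantile f v)] with t ht
  by_cases h : v ≤ f (x - t)
  · have := hf.quantile_le hv h
    rw [if_pos h, indicator_of_mem (mem_Iic.2 (by linarith))]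
  · have := hf.le_quantile hv (not_le.1 h)
    rw [if_neg h, indicator_of_notMem]
    exact fun hmem => ht (le_antisymm hmem (by linarith))

namespace IsAveragingKernel

variable {ω f : ℝ → ℝ}

/- Layer-cake: integrate the indicator of `v ≤ f (x - t)` against `ω t` in both orders. -/
theorem conv_eq_integral_kernelCdf (hω : IsAveragingKernel ω) (hf : IsProfile f) (x : ℝ) :
    conv f ω x = ∫ v in Ioo (0 : ℝ) 1, kernelCdf ω (x - quantile f v) := by
  have hmeas : MeasurableSet {p : ℝ × ℝ | p.2 ≤ f (x - p.1)} :=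
    measurableSet_le measurable_snd
      (hf.memPsi.monotone.measurable.comp (measurable_const.sub measurable_fst))
  have hint : Integrable (fun p : ℝ × ℝ => if p.2 ≤ f (x - p.1) then ω p.1 else 0)
      (volume.prod (volume.restrict (Ioo (0 : ℝ) 1))) :=
    (hω.integrable.comp_fst _).indicator hmeas
  calc conv f ω x
      = ∫ t, ∫ v in Ioo (0 : ℝ) 1, (if v ≤ f (x - t) then ω t else 0) := by
        simp only [conv_eq_integral_sub, hf.memPsi.integral_ite_le]
    _ = ∫ v in Ioo (0 : ℝ) 1, ∫ t, (if v ≤ f (x - t) then ω t else 0) :=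
        integral_integral_swap (f := fun t v => if v ≤ f (x - t) then ω t else 0) hint
    _ = ∫ v in Ioo (0 : ℝ) 1, kernelCdf ω (x - quantile f v) :=
        setIntegral_congr_fun measurableSet_Ioo fun v hv => hf.integral_ite_le_eq_kernelCdf ω hv x

theorem norm_kernelCdf_le_one (hω : IsAveragingKernel ω) (z : ℝ) : ‖kernelCdf ω z‖ ≤ 1 := by
  rw [Real.norm_of_nonneg (hω.kernelCdf_nonneg z)]
  exact hω.kernelCdf_le_one z

theorem integrableOn_kernelCdf_quantile (hω : IsAveragingKernel ω) (hf : IsProfile f) (x : ℝ) :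
    IntegrableOn (fun v => kernelCdf ω (x - quantile f v)) (Ioo 0 1) :=
  Integrable.of_bound (hω.continuous_kernelCdf.measurable.comp_aemeasurable
    (hf.aemeasurable_quantile.const_sub x)).aestronglyMeasurable 1
    (.of_forall fun _ => hω.norm_kernelCdf_le_one _)

/- Of the levels of `f`, those below `p` are kept, those in `[p, p']` contribute at most their
measure, and those above `p'` are too far to the right to contribute more than `ε`. -/
theorem conv_le_integral_kernelCdf_add (hω : IsAveragingKernel ω) (hf : IsProfile f)
    {p p' ε : ℝ} (hp : 0 ≤ p) (hpp' : p ≤ p') (hp' : p' ≤ 1) (hε : 0 ≤ ε) {x : ℝ}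
    (htail : ∀ v ∈ Ioo p' 1, kernelCdf ω (x - quantile f v) ≤ ε) :
    conv f ω x ≤ (∫ v in Ioo 0 p, kernelCdf ω (x - quantile f v)) + (p' - p + ε) := by
  set φ : ℝ → ℝ := fun v => kernelCdf ω (x - quantile f v)
  have hint : ∀ {a b : ℝ}, 0 ≤ a → a ≤ b → b ≤ 1 → IntervalIntegrable φ volume a b :=
    fun ha hab hb => (intervalIntegrable_iff_integrableOn_Ioo_of_le hab).2
      ((hω.integrableOn_kernelCdf_quantile hf x).mono_set (Ioo_subset_Ioo ha hb))
  have hmid : ∫ v in p..p', φ v ≤ p' - p := by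
    simpa using intervalIntegral.integral_mono_on_of_le_Ioo hpp' (hint hp hpp' hp')
      (intervalIntegrable_const (c := (1 : ℝ))) fun v _ => hω.kernelCdf_le_one _
  have hright : ∫ v in p'..1, φ v ≤ (1 - p') * ε := by
    simpa using intervalIntegral.integral_mono_on_of_le_Ioo hp' (hint (hp.trans hpp') hp' le_rfl)
      intervalIntegrable_const htail
  have hsplit : conv f ω x = (∫ v in 0..p, φ v) + ((∫ v in p..p', φ v) + ∫ v in p'..1, φ v) := by
    rw [hω.conv_eq_integral_kernelCdf hf, ← integral_Ioc_eq_integral_Ioo,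
      ← intervalIntegral.integral_of_le zero_le_one,
      intervalIntegral.integral_add_adjacent_intervals (hint hp hpp' hp')
        (hint (hp.trans hpp') hp' le_rfl),
      intervalIntegral.integral_add_adjacent_intervals (hint le_rfl hp (hpp'.trans hp'))
        (hint hp (hpp'.trans hp') le_rfl)]
  rw [hsplit, ← integral_Ioc_eq_integral_Ioo, ← intervalIntegral.integral_of_le hp]
  nlinarith

end IsAveragingKernel

/-- The interaction energy of the levels of `f` below `p`, shifted by `η`, with the levels of `g`
below `q`. Both the integrals of generalized inverses in the potential and the product term
`u v` are compared with such energies. -/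
def interaction (ω f g : ℝ → ℝ) (η p q : ℝ) : ℝ :=
  ∫ z in Ioo 0 p ×ˢ Ioo 0 q, kernelCdf ω (quantile f z.1 + η - quantile g z.2)

theorem volume_real_Ioo_prod_Ioo {p q : ℝ} (hp : 0 ≤ p) (hq : 0 ≤ q) :
    volume.real (Ioo 0 p ×ˢ Ioo 0 q) = p * q := by
  rw [Measure.volume_eq_prod, measureReal_prod_prod, Real.volume_real_Ioo_of_le hp,
    Real.volume_real_Ioo_of_le hq, sub_zero, sub_zero]

theorem integrableOn_const_Ioo_prod_Ioo (c p q : ℝ) :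
    IntegrableOn (fun _ : ℝ × ℝ => c) (Ioo 0 p ×ˢ Ioo 0 q) :=
  integrableOn_const ((Metric.isBounded_Ioo 0 p).prod (Metric.isBounded_Ioo 0 q)).measure_lt_top.ne

namespace IsAveragingKernel

variable {ω f g h : ℝ → ℝ} {η p p' q q' ε : ℝ}

theorem integrableOn_interaction (hω : IsAveragingKernel ω) (hf : IsProfile f) (hg : IsProfile g)
    (η : ℝ) (hp : p ≤ 1) (hq : q ≤ 1) :
    IntegrableOn (fun z : ℝ × ℝ => kernelCdf ω (quantile f z.1 + η - quantile g z.2))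
      (Ioo 0 p ×ˢ Ioo 0 q) := by
  suffices hunit : Integrable (fun z : ℝ × ℝ => kernelCdf ω (quantile f z.1 + η - quantile g z.2))
      ((volume.restrict (Ioo 0 1)).prod (volume.restrict (Ioo 0 1))) by
    rw [Measure.prod_restrict] at hunit
    exact IntegrableOn.mono_set hunit
      (prod_mono (Ioo_subset_Ioo_right hp) (Ioo_subset_Ioo_right hq))
  have hfst := hf.aemeasurable_quantile.comp_quasiMeasurePreserving
    (Measure.quasiMeasurePreserving_fst (ν := volume.restrict (Ioo (0 : ℝ) 1)))
  have hsnd := hg.aemeasurable_quantile.comp_quasiMeasurePreserving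
    (Measure.quasiMeasurePreserving_snd (μ := volume.restrict (Ioo (0 : ℝ) 1)))
  exact .of_bound (hω.continuous_kernelCdf.measurable.comp_aemeasurable
    ((hfst.add_const η).sub hsnd)).aestronglyMeasurable 1
    (.of_forall fun _ => hω.norm_kernelCdf_le_one _)

theorem interaction_eq_integral (hω : IsAveragingKernel ω) (hf : IsProfile f) (hg : IsProfile g)
    (η : ℝ) (hp : p ≤ 1) (hq : q ≤ 1) :
    interaction ω f g η p q =
      ∫ v in Ioo 0 p, ∫ u in Ioo 0 q, kernelCdf ω (quantile f v + η - quantile g u) :=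
  setIntegral_prod _ (hω.integrableOn_interaction hf hg η hp hq)

theorem interaction_add_interaction (hω : IsAveragingKernel ω) (hf : IsProfile f)
    (hg : IsProfile g) (hp : p ∈ Icc (0 : ℝ) 1) (hq : q ∈ Icc (0 : ℝ) 1) :
    interaction ω f g 0 p q + interaction ω g f 0 q p = p * q := by
  set φ : ℝ × ℝ → ℝ := fun z => kernelCdf ω (quantile f z.1 + 0 - quantile g z.2)
  have hswap : interaction ω g f 0 q p = ∫ z in Ioo 0 p ×ˢ Ioo 0 q, (1 - φ z) := by
    rw [interaction, Measure.volume_eq_prod, ← Measure.prod_restrict, ← integral_prod_swap,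
      Measure.prod_restrict]
    refine integral_congr_ae (.of_forall fun z => eq_sub_of_add_eq' ?_)
    convert hω.kernelCdf_add_neg (quantile f z.1 + 0 - quantile g z.2) using 3
    simp only [Prod.fst_swap, Prod.snd_swap, add_zero, neg_sub]
  rw [hswap, integral_sub (integrableOn_const_Ioo_prod_Ioo 1 p q)
      (hω.integrableOn_interaction hf hg 0 hp.2 hq.2),
    setIntegral_const, volume_real_Ioo_prod_Ioo hp.1 hq.1, smul_eq_mul, mul_one]
  exact add_sub_cancel _ _

theorem interaction_mono (hω : IsAveragingKernel ω) (hf : IsProfile f) (hg : IsProfile g)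
    (hp : p ≤ 1) (hq : q ≤ 1) : Monotone fun η => interaction ω f g η p q := fun η η' hη =>
  integral_mono (hω.integrableOn_interaction hf hg η hp hq)
    (hω.integrableOn_interaction hf hg η' hp hq) fun _ => hω.kernelCdf_mono (by gcongr)

theorem interaction_sub_le (hω : IsAveragingKernel ω) (hf : IsProfile f) (hg : IsProfile g)
    (hp : p ∈ Icc (0 : ℝ) 1) (hq : q ∈ Icc (0 : ℝ) 1) {η η' : ℝ} (hη : η ≤ η') :
    interaction ω f g η' p q - interaction ω f g η p q ≤ kerSup ω * (η' - η) := by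
  have hint := hω.integrableOn_interaction hf hg η hp.2 hq.2
  have hint' := hω.integrableOn_interaction hf hg η' hp.2 hq.2
  have hlip : ∀ x y : ℝ, kernelCdf ω (x + η' - y) - kernelCdf ω (x + η - y)
      ≤ kerSup ω * (η' - η) := fun x y => by
    convert hω.kernelCdf_sub_le (show x + η - y ≤ x + η' - y by linarith) using 2
    ring
  rw [interaction, interaction, ← integral_sub hint' hint]
  calc _ ≤ ∫ _ in Ioo 0 p ×ˢ Ioo 0 q, kerSup ω * (η' - η) :=
        integral_mono (hint'.sub hint) (integrableOn_const_Ioo_prod_Ioo _ p q) fun z => hlip _ _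
    _ = p * q * (kerSup ω * (η' - η)) := by
        rw [setIntegral_const, volume_real_Ioo_prod_Ioo hp.1 hq.1, smul_eq_mul]
    _ ≤ kerSup ω * (η' - η) :=
        mul_le_of_le_one_left (mul_nonneg kerSup_nonneg (sub_nonneg.2 hη))
          (mul_le_one₀ hp.2 hq.1 hq.2)

theorem integral_Xinv_le_interaction_add (hω : IsAveragingKernel ω) (hf : IsProfile f)
    (hg : IsProfile g) (hp : p ∈ Icc (0 : ℝ) 1) (hq : 0 ≤ q) (hqq' : q ≤ q') (hq' : q' ≤ 1)
    (hε : 0 ≤ ε) (hinv : ∀ v ∈ Ioo 0 p, Xinv h v ≤ conv g ω (quantile f v + η))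
    (htail : ∀ v ∈ Ioo 0 p, ∀ u ∈ Ioo q' 1,
      kernelCdf ω (quantile f v + η - quantile g u) ≤ ε) :
    ∫ v in 0..p, Xinv h v ≤ interaction ω f g η p q + (q' - q + ε) := by
  have hq1 := hqq'.trans hq'
  have hint : IntegrableOn
      (fun v => ∫ u in Ioo 0 q, kernelCdf ω (quantile f v + η - quantile g u)) (Ioo 0 p) := by
    have := hω.integrableOn_interaction hf hg η hp.2 hq1
    rw [IntegrableOn, Measure.volume_eq_prod, ← Measure.prod_restrict] at this
    exact this.integral_prod_left
  rw [intervalIntegral.integral_of_le hp.1, integral_Ioc_eq_integral_Ioo]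
  calc ∫ v in Ioo 0 p, Xinv h v
      ≤ ∫ v in Ioo 0 p, ((∫ u in Ioo 0 q, kernelCdf ω (quantile f v + η - quantile g u))
          + (q' - q + ε)) :=
        setIntegral_mono_on
          ((intervalIntegrable_iff_integrableOn_Ioo_of_le hp.1).1 (intervalIntegrable_Xinv h 0 p))
          (hint.add (integrable_const _)) measurableSet_Ioo fun v hv => (hinv v hv).trans
            (hω.conv_le_integral_kernelCdf_add hg hq hqq' hq' hε (htail v hv))
    _ = interaction ω f g η p q + p * (q' - q + ε) := by
        rw [integral_add hint (integrable_const _), setIntegral_const,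
          Real.volume_real_Ioo_of_le hp.1, sub_zero, smul_eq_mul,
          hω.interaction_eq_integral hf hg η hp.2 hq1]
    _ ≤ interaction ω f g η p q + (q' - q + ε) := by
        gcongr
        exact mul_le_of_le_one_left (by linarith) hp.2

/- If profiles satisfy the wave equations only at the levels below `p` and `q`, the potential at
`(q, p)` is bounded by the interaction with the remaining levels. -/
theorem Pot_le (hω : IsAveragingKernel ω) {hf hg : ℝ → ℝ} (hpf : IsProfile f) (hpg : IsProfile g)
    (hp : 0 ≤ p) (hpp' : p ≤ p') (hp' : p' ≤ 1) (hq : 0 ≤ q) (hqq' : q ≤ q') (hq' : q' ≤ 1)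
    (hε : 0 ≤ ε) (hinvf : ∀ v ∈ Ioo 0 p, Xinv hf v ≤ conv g ω (quantile f v + η))
    (hinvg : ∀ u ∈ Ioo 0 q, Xinv hg u ≤ conv f ω (quantile g u))
    (htailf : ∀ v ∈ Ioo 0 p, ∀ u ∈ Ioo q' 1,
      kernelCdf ω (quantile f v + η - quantile g u) ≤ ε)
    (htailg : ∀ u ∈ Ioo 0 q, ∀ v ∈ Ioo p' 1, kernelCdf ω (quantile g u - quantile f v) ≤ ε) :
    Pot hf hg q p ≤ kerSup ω * max η 0 + (p' - p) + (q' - q) + 2 * ε := by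
  have hp_mem : p ∈ Icc (0 : ℝ) 1 := ⟨hp, hpp'.trans hp'⟩
  have hq_mem : q ∈ Icc (0 : ℝ) 1 := ⟨hq, hqq'.trans hq'⟩
  have hf_le := hω.integral_Xinv_le_interaction_add hpf hpg hp_mem hq hqq' hq' hε hinvf htailf
  have hg_le := hω.integral_Xinv_le_interaction_add (η := 0) hpg hpf hq_mem hp hpp' hp' hε
    (by simpa using hinvg) (by simpa using htailg)
  have hsymm := hω.interaction_add_interaction hpf hpg hp_mem hq_mem
  have hshift := hω.interaction_mono hpf hpg hp_mem.2 hq_mem.2 (le_max_left η 0)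
  have hlip := hω.interaction_sub_le hpf hpg hp_mem hq_mem (le_max_right η 0)
  rw [sub_zero] at hlip
  rw [Pot]
  linarith

end IsAveragingKernel

/-! ### Limits of monotone functions and of generalized graphs -/

section GraphFill

variable {ι : Type*} {l : Filter ι} {h : ℝ → ℝ} {E w : ι → ℝ}

theorem MemX.comp_memPsi {f : ℝ → ℝ} (hh : MemX h) (hf : MemPsi f) : MemPsi fun x => h (f x) :=
  ⟨fun _ _ hab => hh.1 (hf.mem_Icc _) (hf.mem_Icc _) (hf.monotone hab),
    fun x => hh.2 (hf.mem_Icc x)⟩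

theorem MemX.mem_graphFill_of_tendsto [l.NeBot] {e w₀ : ℝ} (hh : MemX h)
    (hE : Tendsto E l (𝓝 e)) (hw : Tendsto w l (𝓝 w₀)) (hw_mem : ∀ i, w i ∈ Icc (0 : ℝ) 1)
    (he : e ∈ Icc (0 : ℝ) 1) (hmem : ∀ᶠ i in l, E i ∈ graphFill h (w i)) :
    e ∈ graphFill h w₀ := by
  constructor
  · refine lm_le he.1 fun u hu hlt => ge_of_tendsto hE ?_
    filter_upwards [hmem, hw.eventually_const_lt hlt] with i hi hlt
    exact (hh.le_lm hu hlt (hw_mem i).2).trans hi.1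
  · refine le_rm he.2 fun u hlt hu => le_of_tendsto hE ?_
    filter_upwards [hmem, hw.eventually_lt_const hlt] with i hi hlt
    exact hi.2.trans (hh.rm_le (hw_mem i).1 hlt hu)

theorem MemX.tendsto_zero_of_mem_graphFill (hh : MemX h) (h₀ : rm h 0 = 0)
    (hw_mem : ∀ i, w i ∈ Icc (0 : ℝ) 1) (hw : Tendsto w l (𝓝 0))
    (hmem : ∀ i, E i ∈ graphFill h (w i)) : Tendsto E l (𝓝 0) := by
  refine tendsto_order.2 ⟨fun a ha => Eventually.of_forall fun i =>
    ha.trans_le ((hh.lm_nonneg (hw_mem i).2).trans (hmem i).1), fun a ha => ?_⟩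
  obtain ⟨u, hu₀, hu₁, hua⟩ := exists_lt_of_rm_lt (h := h) (u := 0) (min_le_right a 1)
    (by rw [h₀]; exact lt_min ha one_pos)
  filter_upwards [hw.eventually_lt_const hu₀] with i hi
  calc E i ≤ h u := (hmem i).2.trans (hh.rm_le (hw_mem i).1 hi hu₁)
    _ < a := hua.trans_le (min_le_left a 1)

theorem MemX.tendsto_one_of_mem_graphFill (hh : MemX h) (h₁ : lm h 1 = 1)
    (hw_mem : ∀ i, w i ∈ Icc (0 : ℝ) 1) (hw : Tendsto w l (𝓝 1))
    (hmem : ∀ i, E i ∈ graphFill h (w i)) : Tendsto E l (𝓝 1) := by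
  refine tendsto_order.2 ⟨fun a ha => ?_, fun a ha => Eventually.of_forall fun i =>
    ((hmem i).2.trans (hh.rm_le_one (hw_mem i).1)).trans_lt ha⟩
  obtain ⟨u, hu₀, hu₁, hau⟩ := exists_lt_of_lt_lm (h := h) (u := 1) (le_max_right a 0)
    (by rw [h₁]; exact max_lt ha one_pos)
  filter_upwards [hw.eventually_const_lt hu₁] with i hi
  calc a < h u := (le_max_left a 0).trans_lt hau
    _ ≤ E i := (hh.le_lm hu₀ hi (hw_mem i).2).trans (hmem i).1

theorem MemX.Xinv_le_comp_quantile {f w : ℝ → ℝ} {v b : ℝ} (hh : MemX h) (hf : IsProfile f)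
    (hw : Continuous w) (hw₀ : ∀ x, 0 ≤ w x) (hv : v ∈ Ioo (0 : ℝ) 1) (hb : quantile f v < b)
    (hle : ∀ x ∈ Ioo (quantile f v) b, f x ≤ rm h (w x)) : Xinv h v ≤ w (quantile f v) := by
  have hright : Tendsto w (𝓝[>] quantile f v) (𝓝 (w (quantile f v))) :=
    (hw.tendsto _).mono_left nhdsWithin_le_nhds
  refine ge_of_tendsto hright ?_
  filter_upwards [Ioo_mem_nhdsGT hb] with x hx
  exact hh.Xinv_le_of_le_rm (hw₀ x) ((hf.le_of_quantile_lt hv hx.1).trans (hle x hx))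

end GraphFill

namespace MemPsi

variable {f : ℝ → ℝ}

theorem exists_tendsto_atBot (hf : MemPsi f) : ∃ b ∈ Icc (0 : ℝ) 1, Tendsto f atBot (𝓝 b) :=
  have hlim := tendsto_atBot_ciInf hf.monotone ⟨0, forall_mem_range.2 hf.nonneg⟩
  ⟨_, isClosed_Icc.mem_of_tendsto hlim (Eventually.of_forall hf.mem_Icc), hlim⟩

theorem exists_tendsto_atTop (hf : MemPsi f) : ∃ b ∈ Icc (0 : ℝ) 1, Tendsto f atTop (𝓝 b) :=
  have hlim := tendsto_atTop_ciSup hf.monotone ⟨1, forall_mem_range.2 hf.le_one⟩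
  ⟨_, isClosed_Icc.mem_of_tendsto hlim (Eventually.of_forall hf.mem_Icc), hlim⟩

theorem of_tendsto {ι : Type*} {l : Filter ι} [l.NeBot] {fn : ι → ℝ → ℝ}
    (hfn : ∀ n, MemPsi (fn n)) (hlim : ∀ x, Tendsto (fun n => fn n x) l (𝓝 (f x))) : MemPsi f :=
  ⟨fun a b hab => le_of_tendsto_of_tendsto' (hlim a) (hlim b) fun n => (hfn n).monotone hab,
    fun x => isClosed_Icc.mem_of_tendsto (hlim x) (Eventually.of_forall fun n => (hfn n).mem_Icc x)⟩

/- Knaster–Tarski in the complete lattice of monotone maps `ℝ →o Icc 0 1`. -/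
theorem exists_fixedPoint {S : (ℝ → ℝ) → ℝ → ℝ} (hS : ∀ f, MemPsi f → MemPsi (S f))
    (hmono : ∀ f g, MemPsi f → MemPsi g → f ≤ g → S f ≤ S g) : ∃ F, MemPsi F ∧ S F = F := by
  have : Fact ((0 : ℝ) ≤ 1) := ⟨zero_le_one⟩
  have hval (f : ℝ →o Icc (0 : ℝ) 1) : MemPsi fun x => (f x : ℝ) :=
    ⟨fun _ _ hab => f.monotone hab, fun x => (f x).2⟩
  let T : (ℝ →o Icc (0 : ℝ) 1) →o (ℝ →o Icc (0 : ℝ) 1) :=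
    { toFun f := ⟨fun x => ⟨S (fun y => f y) x, (hS _ (hval f)).mem_Icc x⟩,
        fun _ _ hab => (hS _ (hval f)).monotone hab⟩
      monotone' f g hfg x := hmono _ _ (hval f) (hval g) (fun y => hfg y) x }
  let F : ℝ →o Icc (0 : ℝ) 1 := OrderHom.lfp T
  have hfix : T F = F := OrderHom.map_lfp (α := ℝ →o Icc (0 : ℝ) 1) T
  exact ⟨fun x => F x, hval F, funext fun x => congrArg Subtype.val (DFunLike.congr_fun hfix x)⟩

end MemPsi

/-! ### Helly's selection theorem -/

theorem exists_subseq_tendsto_of_countable {fn : ℕ → ℝ → ℝ} (hfn : ∀ n, MemPsi (fn n))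
    {S : Set ℝ} (hS : S.Countable) :
    ∃ φ : ℕ → ℕ, StrictMono φ ∧ ∀ x ∈ S, ∃ y, Tendsto (fun n => fn (φ n) x) atTop (𝓝 y) := by
  have : Countable S := hS.to_subtype
  let u : ℕ → S → Icc (0 : ℝ) 1 := fun n x => ⟨fn n x, (hfn n).mem_Icc x⟩
  obtain ⟨a, φ, hφ, ha⟩ := CompactSpace.tendsto_subseq u
  exact ⟨φ, hφ, fun x hx => ⟨a ⟨x, hx⟩,
    (continuous_subtype_val.tendsto _).comp (tendsto_pi_nhds.1 ha ⟨x, hx⟩)⟩⟩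

theorem exists_monotone_interlacing {g : ℚ → ℝ} (hg : Monotone g) :
    ∃ f : ℝ → ℝ, Monotone f ∧ (∀ (x : ℝ) (q : ℚ), q ≤ x → g q ≤ f x) ∧
      ∀ (x : ℝ) (q : ℚ), x ≤ q → f x ≤ g q := by
  let f (x : ℝ) : ℝ := sSup (g '' {q : ℚ | (q : ℝ) ≤ x})
  have hle (x : ℝ) (q : ℚ) (hx : x ≤ q) : ∀ y ∈ g '' {q : ℚ | (q : ℝ) ≤ x}, y ≤ g q := by
    rintro _ ⟨r, hr, rfl⟩
    exact hg (Rat.cast_le.1 (le_trans hr hx))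
  have hbdd (x : ℝ) : BddAbove (g '' {q : ℚ | (q : ℝ) ≤ x}) :=
    (exists_rat_gt x).imp' g fun q hq => hle x q hq.le
  have hne (x : ℝ) : (g '' {q : ℚ | (q : ℝ) ≤ x}).Nonempty :=
    (exists_rat_lt x).imp' g fun q hq => ⟨q, hq.le, rfl⟩
  exact ⟨f, fun a b hab => csSup_le_csSup (hbdd b) (hne a) (image_mono fun _ hq => hq.trans hab),
    fun x q hq => le_csSup (hbdd x) ⟨q, hq, rfl⟩, fun x q hq => csSup_le (hne x) (hle x q hq)⟩

theorem tendsto_of_tendsto_rat {ι : Type*} {l : Filter ι} {fn : ι → ℝ → ℝ} {f : ℝ → ℝ}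
    {g : ℚ → ℝ} {x : ℝ} (hfn : ∀ n, Monotone (fn n))
    (hg : ∀ q : ℚ, Tendsto (fun n => fn n q) l (𝓝 (g q)))
    (hgf : ∀ (x : ℝ) (q : ℚ), q ≤ x → g q ≤ f x) (hfg : ∀ (x : ℝ) (q : ℚ), x ≤ q → f x ≤ g q)
    (hcont : ContinuousAt f x) : Tendsto (fun n => fn n x) l (𝓝 (f x)) := by
  refine tendsto_order.2 ⟨fun a ha => ?_, fun a ha => ?_⟩
  · have hleft : Tendsto f (𝓝[<] x) (𝓝 (f x)) := hcont.tendsto.mono_left nhdsWithin_le_nhds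
    obtain ⟨y, hy, hyx⟩ := ((hleft.eventually_const_lt ha).and self_mem_nhdsWithin).exists
    obtain ⟨q, hyq, hqx⟩ := exists_rat_btwn hyx
    filter_upwards [(hg q).eventually_const_lt (hy.trans_le (hfg y q hyq.le))] with n hn
    exact hn.trans_le (hfn n hqx.le)
  · have hright : Tendsto f (𝓝[>] x) (𝓝 (f x)) := hcont.tendsto.mono_left nhdsWithin_le_nhds
    obtain ⟨y, hy, hxy⟩ := ((hright.eventually_lt_const ha).and self_mem_nhdsWithin).exists
    obtain ⟨q, hxq, hqy⟩ := exists_rat_btwn hxy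
    filter_upwards [(hg q).eventually_lt_const ((hgf y q hqy.le).trans_lt hy)] with n hn
    exact (hfn n hxq.le).trans_lt hn

theorem exists_subseq_tendsto_of_memPsi {fn : ℕ → ℝ → ℝ} (hfn : ∀ n, MemPsi (fn n)) :
    ∃ φ : ℕ → ℕ, StrictMono φ ∧
      ∃ f, MemPsi f ∧ ∀ x, Tendsto (fun n => fn (φ n) x) atTop (𝓝 (f x)) := by
  obtain ⟨φ, hφ, hrat⟩ :=
    exists_subseq_tendsto_of_countable hfn (countable_range ((↑) : ℚ → ℝ))
  choose g hg using fun q : ℚ => hrat q ⟨q, rfl⟩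
  have hg_mono : Monotone g := fun q r hqr => le_of_tendsto_of_tendsto' (hg q) (hg r) fun n =>
    (hfn _).monotone (by exact_mod_cast hqr)
  obtain ⟨f₀, hf₀, hgf, hfg⟩ := exists_monotone_interlacing hg_mono
  obtain ⟨ψ, hψ, hjump⟩ := exists_subseq_tendsto_of_countable (fun n => hfn (φ n))
    hf₀.countable_not_continuousAt
  have hconv (x : ℝ) : ∃ y, Tendsto (fun n => fn (φ (ψ n)) x) atTop (𝓝 y) := by
    by_cases hx : ContinuousAt f₀ x
    · exact ⟨f₀ x, (tendsto_of_tendsto_rat (fun n => (hfn _).monotone) hg hgf hfg hx).comp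
        hψ.tendsto_atTop⟩
    · exact hjump x hx
  choose f hf using hconv
  exact ⟨φ ∘ ψ, hφ.comp hψ, f, .of_tendsto (fun n => hfn _) hf, hf⟩

/-! ### Truncated and stretched recursions -/

/-- One step of the recursion with the argument of the second convolution stretched by `1 + δ`,
and with the values `0` to the left of `-K` and `1` to the right of `K` imposed. -/
def truncatedStep (ω hf hg : ℝ → ℝ) (δ K : ℝ) (f : ℝ → ℝ) (x : ℝ) : ℝ :=
  if x < -K then 0 else if K ≤ x then 1 else
    hf (conv (fun y => hg (conv f ω y)) ω ((1 + δ) * x))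

section TruncatedStep

variable {ω hf hg f f' : ℝ → ℝ} {δ K x : ℝ}

theorem truncatedStep_of_lt (hx : x < -K) : truncatedStep ω hf hg δ K f x = 0 := if_pos hx

theorem truncatedStep_of_ge (hK : 0 < K) (hx : K ≤ x) : truncatedStep ω hf hg δ K f x = 1 := by
  rw [truncatedStep, if_neg (by linarith), if_pos hx]

theorem truncatedStep_of_abs_lt (hx : |x| < K) :
    truncatedStep ω hf hg δ K f x = hf (conv (fun y => hg (conv f ω y)) ω ((1 + δ) * x)) := by
  rw [truncatedStep, if_neg (neg_lt_of_abs_lt hx).not_gt, if_neg (lt_of_abs_lt hx).not_ge]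

theorem memPsi_truncatedStep (hω : IsAveragingKernel ω) (hhf : MemX hf) (hhg : MemX hg)
    (hδ : 0 < δ) (hK : 0 < K) (hf_mem : MemPsi f) : MemPsi (truncatedStep ω hf hg δ K f) := by
  have hinner := hhf.comp_memPsi (hω.conv (hhg.comp_memPsi (hω.conv hf_mem)))
  refine ⟨fun a b hab => ?_, fun x => ?_⟩ <;> unfold truncatedStep
  · split_ifs
    all_goals first | linarith | skip
    · exact hinner.nonneg _
    · exact hinner.le_one _
    · exact hinner.monotone (by gcongr)
  · split_ifs
    exacts [⟨le_rfl, zero_le_one⟩, ⟨zero_le_one, le_rfl⟩, hinner.mem_Icc _]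

theorem truncatedStep_le_truncatedStep (hω : IsAveragingKernel ω) (hhf : MemX hf) (hhg : MemX hg)
    (hf_mem : MemPsi f) (hf'_mem : MemPsi f') (hle : f ≤ f') :
    truncatedStep ω hf hg δ K f ≤ truncatedStep ω hf hg δ K f' := fun x => by
  have hg_mem := hhg.comp_memPsi (hω.conv hf_mem)
  have hg'_mem := hhg.comp_memPsi (hω.conv hf'_mem)
  unfold truncatedStep
  split_ifs
  · rfl
  · rfl
  · refine hhf.1 ((hω.conv hg_mem).mem_Icc _) ((hω.conv hg'_mem).mem_Icc _)
      (hω.conv_le_conv hg_mem hg'_mem fun t => ?_)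
    exact hhg.1 ((hω.conv hf_mem).mem_Icc _) ((hω.conv hf'_mem).mem_Icc _)
      (hω.conv_le_conv hf_mem hf'_mem fun s => hle _)

end TruncatedStep

/-- `(f, g)` is a fixed point of the truncated recursion with stretch factor `1 + δ` on `[-K, K]`,
translated by `c` so that `f` crosses the level `v₀` at the origin. -/
structure Approximant (ω hf hg : ℝ → ℝ) (v₀ δ K c : ℝ) (f g : ℝ → ℝ) : Prop where
  stretch_pos : 0 < δ
  memPsi_f : MemPsi f
  memPsi_g : MemPsi g
  g_eq : ∀ x, g x = hg (conv f ω x)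
  f_eq : ∀ x, |x + c| < K → f x = hf (conv g ω (x + δ * (x + c)))
  f_eq_zero : ∀ x, x + c < -K → f x = 0
  f_eq_one : ∀ x, K < x + c → f x = 1
  abs_centre_le : |c| ≤ K
  f_le : ∀ x < 0, f x ≤ v₀
  le_f : ∀ x, 0 < x → v₀ ≤ f x

theorem IsProfile.of_eventuallyEq {f : ℝ → ℝ} (hf : MemPsi f) (hbot : f =ᶠ[atBot] fun _ => 0)
    (htop : f =ᶠ[atTop] fun _ => 1) : IsProfile f :=
  ⟨hf, tendsto_const_nhds.congr' hbot.symm, tendsto_const_nhds.congr' htop.symm⟩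

theorem exists_approximant {ω hf hg : ℝ → ℝ} {v₀ δ K : ℝ} (hω : IsAveragingKernel ω)
    (hhf : MemX hf) (hhg : MemX hg) (hv₀ : v₀ ∈ Ioo (0 : ℝ) 1) (hδ : 0 < δ) (hK : 0 < K) :
    ∃ c f g, Approximant ω hf hg v₀ δ K c f g := by
  obtain ⟨F, hF, hfix⟩ := MemPsi.exists_fixedPoint
    (fun _ => memPsi_truncatedStep hω hhf hhg hδ hK)
    (fun _ _ => truncatedStep_le_truncatedStep (δ := δ) (K := K) hω hhf hhg)
  have hF_zero {x : ℝ} (hx : x < -K) : F x = 0 := by rw [← hfix, truncatedStep_of_lt hx]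
  have hF_one {x : ℝ} (hx : K ≤ x) : F x = 1 := by rw [← hfix, truncatedStep_of_ge hK hx]
  have hprof : IsProfile F := .of_eventuallyEq hF
    ((eventually_lt_atBot (-K)).mono fun x => hF_zero)
    ((eventually_ge_atTop K).mono fun x => hF_one)
  have hquantile_ge : -K ≤ quantile F v₀ := le_of_forall_lt_imp_le_of_dense fun x hx =>
    hprof.le_quantile hv₀ (by rw [hF_zero hx]; exact hv₀.1)
  have hquantile_le : quantile F v₀ ≤ K :=
    hprof.quantile_le hv₀ (by rw [hF_one le_rfl]; exact hv₀.2.le)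
  set c := quantile F v₀
  refine ⟨c, fun x => F (x + c), fun x => hg (conv F ω (x + c)), hδ, hF.comp_add_const c,
    (hhg.comp_memPsi (hω.conv hF)).comp_add_const c, fun x => ?_, fun x hx => ?_,
    fun x => hF_zero, fun x hx => hF_one hx.le, abs_le.2 ⟨hquantile_ge, hquantile_le⟩,
    fun x hx => (hprof.lt_of_lt_quantile hv₀ (by linarith)).le,
    fun x hx => hprof.le_of_quantile_lt hv₀ (by linarith)⟩
  · rw [conv_comp_add_const]
  · rw [conv_comp_add_const (fun y => hg (conv F ω y)), ← congrFun hfix (x + c),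
      truncatedStep_of_abs_lt hx]
    ring_nf

namespace Approximant

variable {ω hf hg : ℝ → ℝ} {v₀ δ K c X : ℝ} {f g : ℝ → ℝ}

theorem mirror (h : Approximant ω hf hg v₀ δ K c f g) (hω : IsAveragingKernel ω) :
    Approximant ω (dual hf) (dual hg) (1 - v₀) δ K (-c) (mirror f) (mirror g) where
  stretch_pos := h.stretch_pos
  memPsi_f := h.memPsi_f.mirror
  memPsi_g := h.memPsi_g.mirror
  g_eq x := by
    rw [hω.conv_mirror h.memPsi_f, dual, _root_.mirror, _root_.mirror, sub_sub_cancel, h.g_eq]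
  f_eq x hx := by
    have habs : |-x + c| < K := by rwa [← abs_neg, neg_add, neg_neg]
    rw [hω.conv_mirror h.memPsi_g, dual, _root_.mirror, _root_.mirror, sub_sub_cancel,
      h.f_eq _ habs]
    ring_nf
  f_eq_zero x hx := by rw [_root_.mirror, h.f_eq_one _ (by linarith), sub_self]
  f_eq_one x hx := by rw [_root_.mirror, h.f_eq_zero _ (by linarith), sub_zero]
  abs_centre_le := by rw [abs_neg]; exact h.abs_centre_le
  f_le x hx := sub_le_sub_left (h.le_f (-x) (neg_pos.2 hx)) 1
  le_f x hx := sub_le_sub_left (h.f_le (-x) (neg_neg_iff_pos.2 hx)) 1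

theorem isProfile_f (h : Approximant ω hf hg v₀ δ K c f g) : IsProfile f :=
  .of_eventuallyEq h.memPsi_f
    ((eventually_lt_atBot (-K - c)).mono fun x hx => h.f_eq_zero x (by linarith))
    ((eventually_gt_atTop (K - c)).mono fun x hx => h.f_eq_one x (by linarith))

theorem g_mem_graphFill (h : Approximant ω hf hg v₀ δ K c f g) (hω : IsAveragingKernel ω)
    (hhg : MemX hg) (x : ℝ) : g x ∈ graphFill hg (conv f ω x) := by
  rw [h.g_eq]
  exact hhg.self_mem_graphFill ((hω.conv h.memPsi_f).mem_Icc x)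

theorem f_mem_graphFill (h : Approximant ω hf hg v₀ δ K c f g) (hω : IsAveragingKernel ω)
    (hhf : MemX hf) {x : ℝ} (hx : |x + c| < K) :
    f x ∈ graphFill hf (conv g ω (x + δ * (x + c))) := by
  rw [h.f_eq x hx]
  exact hhf.self_mem_graphFill ((hω.conv h.memPsi_g).mem_Icc _)

theorem isProfile_g (h : Approximant ω hf hg v₀ δ K c f g) (hω : IsAveragingKernel ω)
    (H : CrossingLevel hf hg v₀) : IsProfile g :=
  have hconv := hω.conv h.memPsi_f
  have hgraph := h.g_mem_graphFill hω H.memX_g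
  ⟨h.memPsi_g,
    H.memX_g.tendsto_zero_of_mem_graphFill (H.gap.rm_zero H.memX_f H.memX_g) hconv.mem_Icc
      (hω.tendsto_conv_atBot h.memPsi_f h.isProfile_f.interpolates.1) hgraph,
    H.memX_g.tendsto_one_of_mem_graphFill (H.gap.lm_one H.memX_f H.memX_g) hconv.mem_Icc
      (hω.tendsto_conv_atTop h.memPsi_f h.isProfile_f.interpolates.2) hgraph⟩

theorem Xinv_hg_le (h : Approximant ω hf hg v₀ δ K c f g) (hω : IsAveragingKernel ω)
    (H : CrossingLevel hf hg v₀) {u : ℝ} (hu : u ∈ Ioo (0 : ℝ) 1) :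
    Xinv hg u ≤ conv f ω (quantile g u) :=
  H.memX_g.Xinv_le_comp_quantile (h.isProfile_g hω H) (hω.continuous_conv h.memPsi_f)
    (hω.conv h.memPsi_f).nonneg hu (lt_add_one _) fun x _ => (h.g_mem_graphFill hω H.memX_g x).2

theorem Xinv_hf_le (h : Approximant ω hf hg v₀ δ K c f g) (hω : IsAveragingKernel ω)
    (hhf : MemX hf) (hc : c ≤ 0) (hX : X < K) {v : ℝ} (hv : v ∈ Ioo 0 (f X)) :
    Xinv hf v ≤ conv g ω (quantile f v + max (δ * X) 0) := by
  have hv' : v ∈ Ioo (0 : ℝ) 1 := ⟨hv.1, hv.2.trans_le (h.memPsi_f.le_one X)⟩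
  have hquantile_le : quantile f v ≤ X := h.isProfile_f.quantile_le_of_mem_Ioo hv
  have hquantile_ge : -K - c ≤ quantile f v := le_of_forall_lt_imp_le_of_dense fun x hx =>
    h.isProfile_f.le_quantile hv' (by rw [h.f_eq_zero x (by linarith)]; exact hv.1)
  have hcont : Continuous fun x => conv g ω (x + δ * (x + c)) :=
    (hω.continuous_conv h.memPsi_g).comp (by fun_prop)
  have hstretch : δ * (quantile f v + c) ≤ δ * X :=
    mul_le_mul_of_nonneg_left (by linarith) h.stretch_pos.le
  calc Xinv hf v
      ≤ conv g ω (quantile f v + δ * (quantile f v + c)) :=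
        hhf.Xinv_le_comp_quantile h.isProfile_f hcont (fun _ => (hω.conv h.memPsi_g).nonneg _) hv'
          (hquantile_le.trans_lt hX) fun x hx =>
            (h.f_mem_graphFill hω hhf (abs_lt.2 ⟨by linarith [hx.1], by linarith [hx.2]⟩)).2
    _ ≤ conv g ω (quantile f v + max (δ * X) 0) :=
        hω.conv_mono h.memPsi_g (by linarith [le_max_left (δ * X) 0])

theorem Pot_le (h : Approximant ω hf hg v₀ δ K c f g) (hω : IsAveragingKernel ω)
    (H : CrossingLevel hf hg v₀) (hc : c ≤ 0) (hX : X < K) {L : ℝ} (hL : 0 ≤ L) :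
    Pot hf hg (g X) (f X) ≤ kerSup ω * max (δ * X) 0 + (f (X + L) - f X) + (g (X + L) - g X)
      + 2 * kernelCdf ω (max (δ * X) 0 - L) := by
  have hpf := h.isProfile_f
  have hpg := h.isProfile_g hω H
  have hXL : X ≤ X + L := le_add_of_nonneg_right hL
  have hη := le_max_right (δ * X) 0
  have hpot := hω.Pot_le (hf := hf) (hg := hg) (η := max (δ * X) 0)
    (ε := kernelCdf ω (max (δ * X) 0 - L)) hpf hpg (h.memPsi_f.nonneg X)
    (h.memPsi_f.monotone hXL) (h.memPsi_f.le_one _) (h.memPsi_g.nonneg X)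
    (h.memPsi_g.monotone hXL) (h.memPsi_g.le_one _) (hω.kernelCdf_nonneg _)
    (fun v hv => h.Xinv_hf_le hω H.memX_f hc hX hv)
    (fun u hu => h.Xinv_hg_le hω H ⟨hu.1, hu.2.trans_le (h.memPsi_g.le_one X)⟩)
    (fun v hv u hu => hω.kernelCdf_mono ?_) (fun u hu v hv => hω.kernelCdf_mono ?_)
  · rwa [max_eq_left hη] at hpot
  · linarith [hpf.quantile_le_of_mem_Ioo hv, hpg.le_quantile_of_mem_Ioo hu]
  · linarith [hpg.quantile_le_of_mem_Ioo hu, hpf.le_quantile_of_mem_Ioo hv]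

end Approximant

/-! ### Passing to the limit -/

theorem IsAveragingKernel.Pot_nonpos_of_tendsto {ω hf hg f g : ℝ → ℝ} {l : Filter ℝ} [l.NeBot]
    {a b : ℝ} (hω : IsAveragingKernel ω) (hl : ∀ L : ℝ, Tendsto (fun x => x + L) l l)
    (henergy : ∀ X L, 0 ≤ L →
      Pot hf hg (g X) (f X) ≤ (f (X + L) - f X) + (g (X + L) - g X) + 2 * kernelCdf ω (-L))
    (hf_lim : Tendsto f l (𝓝 a)) (hg_lim : Tendsto g l (𝓝 b)) : Pot hf hg b a ≤ 0 := by
  have hbound (L : ℝ) (hL : 0 ≤ L) : Pot hf hg b a ≤ 2 * kernelCdf ω (-L) := by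
    have hpot : Tendsto (fun X => Pot hf hg (g X) (f X)) l (𝓝 (Pot hf hg b a)) :=
      tendsto_Pot hf hg hg_lim hf_lim
    have hrhs := (((hf_lim.comp (hl L)).sub hf_lim).add
      ((hg_lim.comp (hl L)).sub hg_lim)).add_const (2 * kernelCdf ω (-L))
    rw [sub_self, sub_self, zero_add, zero_add] at hrhs
    exact le_of_tendsto_of_tendsto' hpot hrhs fun X => henergy X L hL
  have htail : Tendsto (fun L => 2 * kernelCdf ω (-L)) atTop (𝓝 0) := by
    simpa using (hω.tendsto_kernelCdf_atBot.comp tendsto_neg_atTop_atBot).const_mul 2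
  exact ge_of_tendsto htail ((eventually_ge_atTop 0).mono hbound)

/-- A pointwise convergent sequence of approximants with centres `c n ≤ 0`, stretches `δ n → 0`
and `δ n * K n → ∞`. -/
structure ConvergentApproximants (ω hf hg : ℝ → ℝ) (v₀ : ℝ) (δ K c : ℕ → ℝ) (fn gn : ℕ → ℝ → ℝ)
    (f g : ℝ → ℝ) : Prop where
  approximant : ∀ n, Approximant ω hf hg v₀ (δ n) (K n) (c n) (fn n) (gn n)
  centre_nonpos : ∀ n, c n ≤ 0
  tendsto_stretch : Tendsto δ atTop (𝓝 0)
  tendsto_stretch_mul : Tendsto (fun n => δ n * K n) atTop atTop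
  memPsi_f : MemPsi f
  memPsi_g : MemPsi g
  tendsto_f : ∀ x, Tendsto (fun n => fn n x) atTop (𝓝 (f x))
  tendsto_g : ∀ x, Tendsto (fun n => gn n x) atTop (𝓝 (g x))

/-- Profiles solving the wave equations with speed `α` up to the values of `hf` and `hg` at their
jumps. -/
structure IsRelaxedWave (ω hf hg f g : ℝ → ℝ) (α : ℝ) : Prop where
  isProfile_f : IsProfile f
  isProfile_g : IsProfile g
  f_mem_graphFill : ∀ x, f x ∈ graphFill hf (conv g ω (x + α))
  g_mem_graphFill : ∀ x, g x ∈ graphFill hg (conv f ω x)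

/-- A relaxed wave together with pairs `(fn n, gn n)` converging to it that solve the exact
equations with the translation by `α` replaced by monotone maps `yn n`. The sequence is kept in
order to remove the ambiguity of the limit equations at the jumps of `hf` and `hg`. -/
structure WaveLimit (ω hf hg : ℝ → ℝ) (v₀ : ℝ) (f g : ℝ → ℝ) (α : ℝ) (fn gn yn : ℕ → ℝ → ℝ) :
    Prop extends IsRelaxedWave ω hf hg f g α where
  memPsi_fn : ∀ n, MemPsi (fn n)
  memPsi_gn : ∀ n, MemPsi (gn n)
  tendsto_f : ∀ x, Tendsto (fun n => fn n x) atTop (𝓝 (f x))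
  tendsto_g : ∀ x, Tendsto (fun n => gn n x) atTop (𝓝 (g x))
  tendsto_y : ∀ x, Tendsto (fun n => yn n x) atTop (𝓝 (x + α))
  monotone_y : ∀ n, Monotone (yn n)
  gn_eq : ∀ n x, gn n x = hg (conv (fn n) ω x)
  fn_eq : ∀ x, ∀ᶠ n in atTop, fn n x = hf (conv (gn n) ω (yn n x))
  speed_nonpos : α ≤ 0
  f_le : ∀ x < 0, f x ≤ v₀

namespace ConvergentApproximants

variable {ω hf hg f g : ℝ → ℝ} {v₀ α : ℝ} {δ K c : ℕ → ℝ} {fn gn : ℕ → ℝ → ℝ}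

theorem comp (A : ConvergentApproximants ω hf hg v₀ δ K c fn gn f g) {φ : ℕ → ℕ}
    (hφ : Tendsto φ atTop atTop) :
    ConvergentApproximants ω hf hg v₀ (δ ∘ φ) (K ∘ φ) (c ∘ φ) (fn ∘ φ) (gn ∘ φ) f g where
  approximant n := A.approximant (φ n)
  centre_nonpos n := A.centre_nonpos (φ n)
  tendsto_stretch := A.tendsto_stretch.comp hφ
  tendsto_stretch_mul := A.tendsto_stretch_mul.comp hφ
  memPsi_f := A.memPsi_f
  memPsi_g := A.memPsi_g
  tendsto_f x := (A.tendsto_f x).comp hφ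
  tendsto_g x := (A.tendsto_g x).comp hφ

theorem eventually_stretch_lt_one (A : ConvergentApproximants ω hf hg v₀ δ K c fn gn f g) :
    ∀ᶠ n in atTop, δ n < 1 :=
  A.tendsto_stretch.eventually_lt_const one_pos

theorem eventually_lt_radius (A : ConvergentApproximants ω hf hg v₀ δ K c fn gn f g) (X : ℝ) :
    ∀ᶠ n in atTop, X < K n := by
  filter_upwards [A.eventually_stretch_lt_one, A.tendsto_stretch_mul.eventually_gt_atTop X]
    with n hδ hX
  have hK : 0 ≤ K n := (abs_nonneg _).trans (A.approximant n).abs_centre_le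
  exact hX.trans_le (mul_le_of_le_one_left hK hδ.le)

theorem f_le (A : ConvergentApproximants ω hf hg v₀ δ K c fn gn f g) {x : ℝ} (hx : x < 0) :
    f x ≤ v₀ :=
  le_of_tendsto' (A.tendsto_f x) fun n => (A.approximant n).f_le x hx

theorem le_f (A : ConvergentApproximants ω hf hg v₀ δ K c fn gn f g) {x : ℝ} (hx : 0 < x) :
    v₀ ≤ f x :=
  ge_of_tendsto' (A.tendsto_f x) fun n => (A.approximant n).le_f x hx

theorem Pot_le (A : ConvergentApproximants ω hf hg v₀ δ K c fn gn f g) (hω : IsAveragingKernel ω)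
    (H : CrossingLevel hf hg v₀) (X L : ℝ) (hL : 0 ≤ L) :
    Pot hf hg (g X) (f X) ≤ (f (X + L) - f X) + (g (X + L) - g X) + 2 * kernelCdf ω (-L) := by
  have hpot : Tendsto (fun n => Pot hf hg (gn n X) (fn n X)) atTop (𝓝 (Pot hf hg (g X) (f X))) :=
    tendsto_Pot hf hg (A.tendsto_g X) (A.tendsto_f X)
  have hshift : Tendsto (fun n => max (δ n * X) 0) atTop (𝓝 0) := by
    simpa using (A.tendsto_stretch.mul_const X).max (tendsto_const_nhds (x := (0 : ℝ)))
  have htail : Tendsto (fun n => kernelCdf ω (max (δ n * X) 0 - L)) atTop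
      (𝓝 (kernelCdf ω (0 - L))) :=
    (hω.continuous_kernelCdf.tendsto _).comp (hshift.sub_const L)
  have hrhs := (((hshift.const_mul (kerSup ω)).add
    ((A.tendsto_f (X + L)).sub (A.tendsto_f X))).add
      ((A.tendsto_g (X + L)).sub (A.tendsto_g X))).add (htail.const_mul 2)
  rw [mul_zero, zero_add, zero_sub] at hrhs
  refine le_of_tendsto_of_tendsto hpot hrhs ?_
  filter_upwards [A.eventually_lt_radius X] with n hn
  exact (A.approximant n).Pot_le hω H (A.centre_nonpos n) hn hL

theorem g_mem_graphFill (A : ConvergentApproximants ω hf hg v₀ δ K c fn gn f g)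
    (hω : IsAveragingKernel ω) (hhg : MemX hg) (x : ℝ) : g x ∈ graphFill hg (conv f ω x) :=
  hhg.mem_graphFill_of_tendsto (A.tendsto_g x)
    (hω.tendsto_conv (fun n => (A.approximant n).memPsi_f) A.memPsi_f A.tendsto_f
      tendsto_const_nhds)
    (fun n => (hω.conv (A.approximant n).memPsi_f).mem_Icc x) (A.memPsi_g.mem_Icc x)
    (Eventually.of_forall fun n => (A.approximant n).g_mem_graphFill hω hhg x)

theorem tendsto_f_atBot (A : ConvergentApproximants ω hf hg v₀ δ K c fn gn f g)
    (hω : IsAveragingKernel ω) (H : CrossingLevel hf hg v₀) : Tendsto f atBot (𝓝 0) := by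
  obtain ⟨a, ha, hfa⟩ := A.memPsi_f.exists_tendsto_atBot
  obtain ⟨b, hb, hgb⟩ := A.memPsi_g.exists_tendsto_atBot
  have hpot : Pot hf hg b a ≤ 0 := hω.Pot_nonpos_of_tendsto
    (fun L => tendsto_atBot_add_const_right _ L tendsto_id) (A.Pot_le hω H) hfa hgb
  have hav₀ : a ≤ v₀ := le_of_tendsto hfa ((eventually_lt_atBot 0).mono fun x => A.f_le)
  obtain rfl | ha₀ := ha.1.eq_or_lt
  · exact hfa
  · exact absurd (H.Pot_pos hb ⟨ha₀, hav₀⟩) hpot.not_gt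

theorem tendsto_g_atBot (A : ConvergentApproximants ω hf hg v₀ δ K c fn gn f g)
    (hω : IsAveragingKernel ω) (H : CrossingLevel hf hg v₀) : Tendsto g atBot (𝓝 0) :=
  H.memX_g.tendsto_zero_of_mem_graphFill (H.gap.rm_zero H.memX_f H.memX_g)
    (hω.conv A.memPsi_f).mem_Icc (hω.tendsto_conv_atBot A.memPsi_f (A.tendsto_f_atBot hω H))
    (A.g_mem_graphFill hω H.memX_g)

/- If `δ n * c n` were very negative, the equation for `fn n` at `1` would see `gn n` far to the
left, where it is small, and `fn n 1` would fall below `v₀`. -/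
theorem exists_eventually_lt_stretch_mul_centre
    (A : ConvergentApproximants ω hf hg v₀ δ K c fn gn f g) (hω : IsAveragingKernel ω)
    (H : CrossingLevel hf hg v₀) : ∃ y, ∀ᶠ n in atTop, y < δ n * c n := by
  have hrm : rm hf 0 < v₀ := (H.gap.swap.rm_zero H.memX_g H.memX_f).trans_lt H.mem_Ioo.1
  obtain ⟨u, hu₀, hu₁, huv⟩ := exists_lt_of_rm_lt H.mem_Ioo.2.le hrm
  obtain ⟨y, hy⟩ := ((hω.tendsto_conv_atBot A.memPsi_g
    (A.tendsto_g_atBot hω H)).eventually_lt_const hu₀).exists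
  have hconv : Tendsto (fun n => conv (gn n) ω y) atTop (𝓝 (conv g ω y)) :=
    hω.tendsto_conv (fun n => (A.approximant n).memPsi_g) A.memPsi_g A.tendsto_g tendsto_const_nhds
  refine ⟨y - 2, ?_⟩
  filter_upwards [A.eventually_lt_radius 1, A.eventually_stretch_lt_one,
    hconv.eventually_lt_const hy] with n hK hδ hn
  by_contra! hcon
  have h := A.approximant n
  have hmem := hω.conv h.memPsi_g
  have hdom : |1 + c n| < K n :=
    abs_lt.2 ⟨by linarith [(abs_le.1 h.abs_centre_le).1], by linarith [A.centre_nonpos n]⟩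
  have hsmall : conv (gn n) ω (1 + δ n * (1 + c n)) ≤ u :=
    (hmem.monotone (by linarith)).trans hn.le
  have hlt : fn n 1 < v₀ := by
    rw [h.f_eq 1 hdom]
    exact (H.memX_f.1 (hmem.mem_Icc _) ⟨hu₀.le, hu₁⟩ hsmall).trans_lt huv
  exact hlt.not_ge (h.le_f 1 one_pos)

theorem exists_subseq_tendsto (A : ConvergentApproximants ω hf hg v₀ δ K c fn gn f g)
    (hω : IsAveragingKernel ω) (H : CrossingLevel hf hg v₀) :
    ∃ α ≤ 0, ∃ φ : ℕ → ℕ, StrictMono φ ∧ Tendsto (fun n => δ (φ n) * c (φ n)) atTop (𝓝 α) := by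
  obtain ⟨y, hy⟩ := A.exists_eventually_lt_stretch_mul_centre hω H
  have hmem : ∀ᶠ n in atTop, δ n * c n ∈ Icc y 0 := hy.mono fun n hn =>
    ⟨hn.le, mul_nonpos_of_nonneg_of_nonpos (A.approximant n).stretch_pos.le (A.centre_nonpos n)⟩
  obtain ⟨α, hα, φ, hφ, hlim⟩ := isCompact_Icc.tendsto_subseq' hmem.frequently
  exact ⟨α, hα.2, φ, hφ, hlim⟩

theorem eventually_abs_add_lt (A : ConvergentApproximants ω hf hg v₀ δ K c fn gn f g)
    (hα : Tendsto (fun n => δ n * c n) atTop (𝓝 α)) (x : ℝ) :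
    ∀ᶠ n in atTop, |x + c n| < K n := by
  filter_upwards [hα.eventually_const_lt (sub_one_lt α), A.eventually_stretch_lt_one,
    A.tendsto_stretch_mul.eventually_gt_atTop (|x| - (α - 1))] with n hc hδ hK
  have hpos := (A.approximant n).stretch_pos
  have hscaled : δ n * |x| < δ n * (K n + c n) := by
    calc δ n * |x| ≤ |x| := mul_le_of_le_one_left (abs_nonneg x) hδ.le
      _ < δ n * (K n + c n) := by linarith
  have hx := lt_of_mul_lt_mul_left hscaled hpos.le
  exact abs_lt.2 ⟨by linarith [neg_abs_le x], by linarith [le_abs_self x, A.centre_nonpos n]⟩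

theorem tendsto_stretched (A : ConvergentApproximants ω hf hg v₀ δ K c fn gn f g)
    (hα : Tendsto (fun n => δ n * c n) atTop (𝓝 α)) (x : ℝ) :
    Tendsto (fun n => x + δ n * (x + c n)) atTop (𝓝 (x + α)) := by
  simpa [mul_add] using ((A.tendsto_stretch.mul_const x).add hα).const_add x

theorem f_mem_graphFill (A : ConvergentApproximants ω hf hg v₀ δ K c fn gn f g)
    (hω : IsAveragingKernel ω) (hhf : MemX hf) (hα : Tendsto (fun n => δ n * c n) atTop (𝓝 α))
    (x : ℝ) : f x ∈ graphFill hf (conv g ω (x + α)) :=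
  hhf.mem_graphFill_of_tendsto (A.tendsto_f x)
    (hω.tendsto_conv (fun n => (A.approximant n).memPsi_g) A.memPsi_g A.tendsto_g
      (A.tendsto_stretched hα x))
    (fun n => (hω.conv (A.approximant n).memPsi_g).mem_Icc _) (A.memPsi_f.mem_Icc x)
    ((A.eventually_abs_add_lt hα x).mono fun n => (A.approximant n).f_mem_graphFill hω hhf)

theorem tendsto_atTop_one (A : ConvergentApproximants ω hf hg v₀ δ K c fn gn f g)
    (hω : IsAveragingKernel ω) (H : CrossingLevel hf hg v₀)
    (hα : Tendsto (fun n => δ n * c n) atTop (𝓝 α)) :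
    Tendsto f atTop (𝓝 1) ∧ Tendsto g atTop (𝓝 1) := by
  obtain ⟨a, ha, hfa⟩ := A.memPsi_f.exists_tendsto_atTop
  obtain ⟨b, hb, hgb⟩ := A.memPsi_g.exists_tendsto_atTop
  have hpot : Pot hf hg b a ≤ 0 := hω.Pot_nonpos_of_tendsto
    (fun L => tendsto_atTop_add_const_right _ L tendsto_id) (A.Pot_le hω H) hfa hgb
  have hav₀ : v₀ ≤ a := ge_of_tendsto hfa ((eventually_gt_atTop 0).mono fun x => A.le_f)
  have hf_conv := hω.conv A.memPsi_f
  have hg_conv := hω.conv A.memPsi_g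
  have hcross : IsCrossing hf hg b a := ⟨hb, ha,
    H.memX_g.mem_graphFill_of_tendsto hgb (hω.tendsto_conv_atTop A.memPsi_f hfa) hf_conv.mem_Icc hb
      (Eventually.of_forall (A.g_mem_graphFill hω H.memX_g)),
    H.memX_f.mem_graphFill_of_tendsto hfa
      ((hω.tendsto_conv_atTop A.memPsi_g hgb).comp (tendsto_atTop_add_const_right _ α tendsto_id))
      (fun x => hg_conv.mem_Icc _) ha
      (Eventually.of_forall (A.f_mem_graphFill hω H.memX_f hα))⟩
  by_cases hone : b = 1 ∧ a = 1
  · obtain ⟨rfl, rfl⟩ := hone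
    exact ⟨hfa, hgb⟩
  · have hzero : ¬(b = 0 ∧ a = 0) := fun h => by linarith [H.mem_Ioo.1]
    linarith [le_max_left 0 (Agap hf hg), H.gap.2 b a hcross hzero hone]

theorem waveLimit (A : ConvergentApproximants ω hf hg v₀ δ K c fn gn f g)
    (hω : IsAveragingKernel ω) (H : CrossingLevel hf hg v₀)
    (hα : Tendsto (fun n => δ n * c n) atTop (𝓝 α)) (hα₀ : α ≤ 0) :
    WaveLimit ω hf hg v₀ f g α fn gn fun n x => x + δ n * (x + c n) where
  isProfile_f := ⟨A.memPsi_f, A.tendsto_f_atBot hω H, (A.tendsto_atTop_one hω H hα).1⟩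
  isProfile_g := ⟨A.memPsi_g, A.tendsto_g_atBot hω H, (A.tendsto_atTop_one hω H hα).2⟩
  f_mem_graphFill := A.f_mem_graphFill hω H.memX_f hα
  g_mem_graphFill := A.g_mem_graphFill hω H.memX_g
  memPsi_fn n := (A.approximant n).memPsi_f
  memPsi_gn n := (A.approximant n).memPsi_g
  tendsto_f := A.tendsto_f
  tendsto_g := A.tendsto_g
  tendsto_y := A.tendsto_stretched hα
  monotone_y n x y hxy := by
    have hpos := (A.approximant n).stretch_pos
    beta_reduce
    gcongr
  gn_eq n := (A.approximant n).g_eq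
  fn_eq x := (A.eventually_abs_add_lt hα x).mono fun n => (A.approximant n).f_eq x
  speed_nonpos := hα₀
  f_le _ := A.f_le

end ConvergentApproximants

theorem CrossingLevel.exists_waveLimit {ω hf hg : ℝ → ℝ} {v₀ : ℝ} {δ K c : ℕ → ℝ}
    {fn gn : ℕ → ℝ → ℝ} (H : CrossingLevel hf hg v₀) (hω : IsAveragingKernel ω)
    (happrox : ∀ n, Approximant ω hf hg v₀ (δ n) (K n) (c n) (fn n) (gn n)) (hc : ∀ n, c n ≤ 0)
    (hδ : Tendsto δ atTop (𝓝 0)) (hδK : Tendsto (fun n => δ n * K n) atTop atTop) :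
    ∃ f g α fn gn yn, WaveLimit ω hf hg v₀ f g α fn gn yn := by
  obtain ⟨φ, hφ, f, hf_mem, hf_lim⟩ :=
    exists_subseq_tendsto_of_memPsi fun n => (happrox n).memPsi_f
  obtain ⟨ψ, hψ, g, hg_mem, hg_lim⟩ :=
    exists_subseq_tendsto_of_memPsi fun n => (happrox (φ n)).memPsi_g
  have hθ : Tendsto (φ ∘ ψ) atTop atTop := (hφ.comp hψ).tendsto_atTop
  have A : ConvergentApproximants ω hf hg v₀ (δ ∘ φ ∘ ψ) (K ∘ φ ∘ ψ) (c ∘ φ ∘ ψ) (fn ∘ φ ∘ ψ)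
      (gn ∘ φ ∘ ψ) f g :=
    ⟨fun n => happrox _, fun n => hc _, hδ.comp hθ, hδK.comp hθ, hf_mem, hg_mem,
      fun x => (hf_lim x).comp hψ.tendsto_atTop, hg_lim⟩
  obtain ⟨α, hα₀, χ, hχ, hα⟩ := A.exists_subseq_tendsto hω H
  exact ⟨f, g, α, _, _, _, (A.comp hχ.tendsto_atTop).waveLimit hω H hα hα₀⟩

/-! ### Flat pieces -/

theorem exists_mem_Ioo_of_ae_restrict {P : ℝ → Prop} {a b : ℝ} (hab : a < b)
    (hP : ∀ᵐ x ∂volume.restrict (Ioo a b), P x) : ∃ x ∈ Ioo a b, P x := by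
  have : NeBot (ae (volume.restrict (Ioo a b))) := by
    rw [ae_neBot, Ne, Measure.restrict_eq_zero, Real.volume_Ioo, ENNReal.ofReal_eq_zero]
    linarith
  exact ((ae_restrict_mem measurableSet_Ioo).and hP).exists

theorem le_left_of_eqOn_Ioo {f : ℝ → ℝ} {a b c d r r' : ℝ} (hf : Monotone f) (hab : a < b)
    (hcd : c < d) (hr : ∀ x ∈ Ioo a b, f x = r) (hr' : ∀ x ∈ Ioo c d, f x = r') (hlt : r < r') :
    b ≤ c := by
  by_contra! hcb
  obtain ⟨y, hcy, hy⟩ := exists_between (lt_min hcb hcd)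
  obtain ⟨x, hx, hxb⟩ := exists_between (max_lt hab (lt_min_iff.1 hy).1)
  have hyx := hf (max_lt_iff.1 hx).2.le
  rw [hr' y ⟨hcy, (lt_min_iff.1 hy).2⟩, hr x ⟨(max_lt_iff.1 hx).1, hxb⟩] at hyx
  exact hlt.not_ge hyx

theorem mem_Ioo_of_mem_graphFill {h : ℝ → ℝ} {w e : ℝ} (h₀ : rm h 0 = 0) (h₁ : lm h 1 = 1)
    (hw : w ∈ Icc (0 : ℝ) 1) (he : e ∈ Ioo (0 : ℝ) 1) (hmem : e ∈ graphFill h w) :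
    w ∈ Ioo (0 : ℝ) 1 := by
  refine ⟨hw.1.lt_of_ne ?_, hw.2.lt_of_ne ?_⟩
  · rintro rfl
    exact he.1.not_ge (h₀ ▸ hmem.2)
  · rintro rfl
    exact he.2.not_ge (h₁ ▸ hmem.1)

/-- Each point of `s` is eventually sent to `c` by the functions `En n`. -/
def StabilizesOn (En : ℕ → ℝ → ℝ) (s : Set ℝ) (c : ℝ) : Prop :=
  ∀ x ∈ s, ∀ᶠ n in atTop, En n x = c

namespace IsAveragingKernel

variable {ω k : ℝ → ℝ} {s t : ℝ}

theorem ae_eq_of_conv_eq (hω : IsAveragingKernel ω) (hk : MemPsi k) (hst : s ≤ t)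
    (heq : conv k ω s = conv k ω t) : ∀ᵐ τ, 0 < ω τ → k (s - τ) = k (t - τ) := by
  have hle : ∀ τ, k (s - τ) * ω τ ≤ k (t - τ) * ω τ := fun τ =>
    mul_le_mul_of_nonneg_right (hk.monotone (sub_le_sub_right hst τ)) (hω.nonneg τ)
  have hae := (integral_eq_iff_of_ae_le (hω.integrable_mul hk s) (hω.integrable_mul hk t)
    (Eventually.of_forall hle)).1 (by rwa [← conv_eq_integral_sub, ← conv_eq_integral_sub])
  filter_upwards [hae] with τ hτ hpos using mul_right_cancel₀ hpos.ne' hτ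

theorem eq_of_conv_eq {ρ : ℝ} (hω : IsAveragingKernel ω) (hk : MemPsi k) (hst : s < t)
    (hρ : 0 < ρ) (hpos : ∀ x, |x| < ρ → 0 < ω x) (heq : conv k ω s = conv k ω t) {x y : ℝ}
    (hx : x ∈ Ioo (s - ρ) (t + ρ)) (hy : y ∈ Ioo (s - ρ) (t + ρ)) : k x = k y := by
  refine isPreconnected_Ioo.induction₂ (fun x y => k x = k y) (fun z hz => ?_)
    (fun _ _ _ _ _ _ => Eq.trans) (fun _ _ _ _ => Eq.symm) hx hy
  have hlt : max (s - z) (-ρ) < min (t - z) ρ :=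
    max_lt (lt_min (by linarith) (by linarith [hz.1])) (lt_min (by linarith [hz.2]) (by linarith))
  obtain ⟨τ, ⟨hτl, hτr⟩, hτ⟩ := exists_mem_Ioo_of_ae_restrict hlt
    (ae_restrict_of_ae (hω.ae_eq_of_conv_eq hk hst.le heq))
  rw [max_lt_iff] at hτl
  rw [lt_min_iff] at hτr
  have hends := hτ (hpos τ (abs_lt.2 ⟨hτl.2, hτr.2⟩))
  have hconst : ∀ y ∈ Ioo (s - τ) (t - τ), k y = k (s - τ) := fun y hy =>
    le_antisymm (hends ▸ hk.monotone hy.2.le) (hk.monotone hy.1.le)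
  have hzτ : z ∈ Ioo (s - τ) (t - τ) := ⟨by linarith, by linarith⟩
  filter_upwards [mem_nhdsWithin_of_mem_nhds (Ioo_mem_nhds hzτ.1 hzτ.2)] with y hy
  rw [hconst z hzτ, hconst y hy]

theorem strictMono_conv (hω : IsAveragingKernel ω) (hpos : ∀ x, 0 < ω x) (hk : IsProfile k) :
    StrictMono (conv k ω) := by
  refine fun s t hst => (hω.conv_mono hk.memPsi hst.le).lt_of_ne fun heq => ?_
  have hconst (x : ℝ) : k x = k s := by
    have hρ : 0 < |x - s| + 1 := by positivity
    obtain ⟨hl, hr⟩ := abs_lt.1 (lt_add_one |x - s|)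
    exact hω.eq_of_conv_eq hk.memPsi hst hρ (fun z _ => hpos z) heq
      ⟨by linarith, by linarith⟩ ⟨by linarith, by linarith⟩
  have h₀ := hk.interpolates.1
  have h₁ := hk.interpolates.2
  rw [funext hconst, tendsto_const_nhds_iff] at h₀ h₁
  exact zero_ne_one (h₀.symm.trans h₁)

end IsAveragingKernel

namespace HasRadius

variable {ω k : ℝ → ℝ} {W c s t m : ℝ}

theorem conv_eq (hW : HasRadius ω W) (hω : IsAveragingKernel ω)
    (hk : ∀ y ∈ Icc (m - W) (m + W), k y = c) : conv k ω m = c := by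
  rw [← hω.conv_const c m, conv_eq_integral_sub, conv_eq_integral_sub]
  congr 1 with τ
  rcases le_or_gt |τ| W with hτ | hτ
  · rw [hk _ ⟨by linarith [(abs_le.1 hτ).2], by linarith [(abs_le.1 hτ).1]⟩]
  · rw [hW.eq_zero τ hτ, mul_zero, mul_zero]

theorem eq_conv_of_conv_eq (hW : HasRadius ω W) (hω : IsAveragingKernel ω) (hk : MemPsi k)
    (hst : s < t) (heq : conv k ω s = conv k ω t) {x : ℝ} (hx : x ∈ Ioo (s - W) (t + W)) :
    k x = conv k ω s := by
  obtain ⟨m, hsm, hmt⟩ := exists_between hst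
  have hm : conv k ω m = k x := hW.conv_eq hω fun y hy =>
    hω.eq_of_conv_eq hk hst hW.radius_pos hW.pos heq ⟨by linarith [hy.1], by linarith [hy.2]⟩ hx
  rw [← hm]
  exact le_antisymm (heq ▸ hω.conv_mono hk hmt.le) (hω.conv_mono hk hsm.le)

theorem eventually_conv_eq {kn : ℕ → ℝ → ℝ} {y : ℕ → ℝ} (hW : HasRadius ω W)
    (hω : IsAveragingKernel ω) (hkn : ∀ n, MemPsi (kn n))
    (hstab : StabilizesOn kn (Ioo (s - W) (t + W)) c) (hm : m ∈ Ioo s t)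
    (hy : Tendsto y atTop (𝓝 m)) : ∀ᶠ n in atTop, conv (kn n) ω (y n) = c := by
  obtain ⟨s', hs, hsm⟩ := exists_between hm.1
  obtain ⟨t', hmt, ht⟩ := exists_between hm.2
  have hpos := hW.radius_pos
  filter_upwards [hstab (s' - W) ⟨by linarith, by linarith⟩,
    hstab (t' + W) ⟨by linarith, by linarith⟩, hy.eventually_const_lt hsm,
    hy.eventually_lt_const hmt] with n hleft hright hys hyt
  exact hW.conv_eq hω fun x hx =>
    le_antisymm (hright ▸ (hkn n).monotone (by linarith [hx.2]))
      (hleft ▸ (hkn n).monotone (by linarith [hx.1]))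

end HasRadius

theorem MemX.comp_ae_eq {h E w : ℝ → ℝ} (hh : MemX h) (h₀ : rm h 0 = 0) (h₁ : lm h 1 = 1)
    (hE : MemPsi E) (hw : MemPsi w) (hmem : ∀ x, E x ∈ graphFill h (w x))
    (hflat : ∀ s t, s < t → w s = w t → w s ∈ Ioo (0 : ℝ) 1 → ∃ m ∈ Icc s t, E m = h (w s)) :
    (fun x => h (w x)) =ᵐ[volume] E := by
  have hflat' (s t : ℝ) (hst : s < t) (heq : w s = w t) : ∃ m ∈ Icc s t, E m = h (w s) := by
    by_cases hval : E s = h (w s)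
    · exact ⟨s, left_mem_Icc.2 hst.le, hval⟩
    refine hflat s t hst heq ⟨(hw.nonneg s).lt_of_ne fun hzero => hval ?_,
      (hw.le_one s).lt_of_ne fun hone => hval ?_⟩
    · have hself := hh.self_mem_graphFill (hw.mem_Icc s)
      have hs := hmem s
      rw [← hzero, graphFill, lm_zero, h₀, Icc_self] at hs hself
      rw [hs, ← hzero, hself]
    · have hself := hh.self_mem_graphFill (hw.mem_Icc s)
      have hs := hmem s
      rw [hone, graphFill, rm_one, h₁, Icc_self] at hs hself
      rw [hs, hone, hself]
  refine ae_eq_of_interlacing hE.monotone (fun x y hxy => ?_) fun x y hxy => ?_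
  · rcases (hw.monotone hxy.le).lt_or_eq with hlt | heq
    · exact (hmem x).2.trans (hh.rm_le (hw.nonneg x) hlt (hw.le_one y))
    · obtain ⟨m, hm, hval⟩ := hflat' x y hxy heq
      rw [← heq, ← hval]
      exact hE.monotone hm.1
  · rcases (hw.monotone hxy.le).lt_or_eq with hlt | heq
    · exact (hh.le_lm (hw.nonneg x) hlt (hw.le_one y)).trans (hmem y).1
    · obtain ⟨m, hm, hval⟩ := hflat' x y hxy heq
      rw [← hval]
      exact hE.monotone hm.2

/-- Pointwise limits `E`, `w` of functions satisfying `En n = h ∘ wn n`, where the equation need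
only hold eventually at each point. -/
structure CompositionLimit (h E w : ℝ → ℝ) (En wn : ℕ → ℝ → ℝ) : Prop where
  memX : MemX h
  memPsi_w : MemPsi w
  memPsi_wn : ∀ n, MemPsi (wn n)
  tendsto_E : ∀ x, Tendsto (fun n => En n x) atTop (𝓝 (E x))
  tendsto_w : ∀ x, Tendsto (fun n => wn n x) atTop (𝓝 (w x))
  eventually_eq : ∀ x, ∀ᶠ n in atTop, En n x = h (wn n x)

namespace CompositionLimit

variable {h E w : ℝ → ℝ} {En wn : ℕ → ℝ → ℝ} {x y a b c e u : ℝ}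

theorem eq_of_eventually_eq (L : CompositionLimit h E w En wn)
    (hc : ∀ᶠ n in atTop, wn n x = c) : E x = h c := by
  refine tendsto_nhds_unique (L.tendsto_E x) (tendsto_const_nhds.congr' ?_)
  filter_upwards [hc, L.eventually_eq x] with n hn heq
  rw [heq, hn]

theorem eventually_le_of_lt (L : CompositionLimit h E w En wn) (hu : w x < u) (hu₁ : u ≤ 1) :
    ∀ᶠ n in atTop, En n x ≤ h u := by
  filter_upwards [L.eventually_eq x, (L.tendsto_w x).eventually_lt_const hu] with n heq hn
  rw [heq]
  exact L.memX.1 ((L.memPsi_wn n).mem_Icc x) ⟨(L.memPsi_w.nonneg x).trans hu.le, hu₁⟩ hn.le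

theorem eventually_ge_of_lt (L : CompositionLimit h E w En wn) (hu : u < w x) (hu₀ : 0 ≤ u) :
    ∀ᶠ n in atTop, h u ≤ En n x := by
  filter_upwards [L.eventually_eq x, (L.tendsto_w x).eventually_const_lt hu] with n heq hn
  rw [heq]
  exact L.memX.1 ⟨hu₀, hu.le.trans (L.memPsi_w.le_one x)⟩ ((L.memPsi_wn n).mem_Icc x) hn.le

theorem eventually_apply_le (L : CompositionLimit h E w En wn) (hxy : x ≤ y) :
    ∀ᶠ n in atTop, En n x ≤ En n y := by
  filter_upwards [L.eventually_eq x, L.eventually_eq y] with n hx hy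
  rw [hx, hy]
  exact (L.memX.comp_memPsi (L.memPsi_wn n)).monotone hxy

theorem eventually_eq_of_flat (L : CompositionLimit h E w En wn)
    (hc : ∀ᶠ n in atTop, wn n x = c) : ∀ᶠ n in atTop, En n x = E x := by
  filter_upwards [hc, L.eventually_eq x] with n hn heq
  rw [heq, hn, L.eq_of_eventually_eq hc]

/- Between `x < y` either the arguments separate strictly, and `h` at an intermediate level
compares the two values, or they agree, and an intermediate point has already stabilized. -/
theorem eventually_le_of_flat (L : CompositionLimit h E w En wn) (hxy : x < y)
    (hflat : w x = w y → StabilizesOn wn (Ioo x y) (w x))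
    (hE : ∀ z ∈ Icc x y, E z = e) :
    (∀ᶠ n in atTop, e ≤ En n y) ∧ ∀ᶠ n in atTop, En n x ≤ e := by
  have hEx := hE x (left_mem_Icc.2 hxy.le)
  have hEy := hE y (right_mem_Icc.2 hxy.le)
  rcases (L.memPsi_w.monotone hxy.le).lt_or_eq with hlt | heq
  · obtain ⟨u, hxu, huy⟩ := exists_between hlt
    have hle := L.eventually_le_of_lt hxu (huy.le.trans (L.memPsi_w.le_one y))
    have hge := L.eventually_ge_of_lt huy ((L.memPsi_w.nonneg x).trans hxu.le)
    have heu : h u = e := le_antisymm (hEy ▸ ge_of_tendsto (L.tendsto_E y) hge)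
      (hEx ▸ le_of_tendsto (L.tendsto_E x) hle)
    exact heu ▸ ⟨hge, hle⟩
  · obtain ⟨m, hxm, hmy⟩ := exists_between hxy
    have hm := L.eventually_eq_of_flat (hflat heq m ⟨hxm, hmy⟩)
    rw [hE m ⟨hxm.le, hmy.le⟩] at hm
    constructor
    · filter_upwards [hm, L.eventually_apply_le hmy.le] with n hn hle using hn ▸ hle
    · filter_upwards [hm, L.eventually_apply_le hxm.le] with n hn hle using hn ▸ hle

theorem stabilizesOn (L : CompositionLimit h E w En wn) (hE : ∀ x ∈ Ioo a b, E x = e)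
    (hflat : ∀ s t, a < s → s < t → t < b → w s = w t → StabilizesOn wn (Ioo s t) (w s)) :
    StabilizesOn En (Ioo a b) e := by
  intro x hx
  obtain ⟨s, has, hsx⟩ := exists_between hx.1
  obtain ⟨t, hxt, htb⟩ := exists_between hx.2
  have hlower := (L.eventually_le_of_flat hsx (hflat s x has hsx hx.2) fun z hz =>
    hE z ⟨has.trans_le hz.1, hz.2.trans_lt hx.2⟩).1
  have hupper := (L.eventually_le_of_flat hxt (hflat x t hx.1 hxt htb) fun z hz =>
    hE z ⟨hx.1.trans_le hz.1, hz.2.trans_lt htb⟩).2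
  filter_upwards [hlower, hupper] with n hle hge using le_antisymm hge hle

end CompositionLimit

theorem MemX.Xinv_eq_comp_quantile {h f w : ℝ → ℝ} {v : ℝ} (hh : MemX h) (hf : IsProfile f)
    (hw : Continuous w) (hw_mem : ∀ x, w x ∈ Icc (0 : ℝ) 1)
    (hmem : ∀ x, f x ∈ graphFill h (w x)) (hv : v ∈ Ioo (0 : ℝ) 1) :
    Xinv h v = w (quantile f v) := by
  refine le_antisymm (hh.Xinv_le_comp_quantile hf hw (fun x => (hw_mem x).1) hv (lt_add_one _)
    fun x _ => (hmem x).2) ?_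
  have hleft : Tendsto w (𝓝[<] quantile f v) (𝓝 (w (quantile f v))) :=
    (hw.tendsto _).mono_left nhdsWithin_le_nhds
  refine le_of_tendsto hleft ?_
  filter_upwards [self_mem_nhdsWithin] with x hx
  exact hh.le_Xinv_of_lm_lt (hw_mem x).2 ((hmem x).1.trans_lt (hf.lt_of_lt_quantile hv hx))

namespace IsRelaxedWave

variable {ω hf hg f g : ℝ → ℝ} {α v₀ W p q r c s t x₁ x₂ y₁ y₂ : ℝ}

theorem Xinv_hf_eq (h : IsRelaxedWave ω hf hg f g α) (hω : IsAveragingKernel ω) (hhf : MemX hf)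
    {v : ℝ} (hv : v ∈ Ioo (0 : ℝ) 1) : Xinv hf v = conv g ω (quantile f v + α) :=
  hhf.Xinv_eq_comp_quantile h.isProfile_f
    ((hω.continuous_conv h.isProfile_g.memPsi).comp (continuous_add_const α))
    (fun _ => (hω.conv h.isProfile_g.memPsi).mem_Icc _) h.f_mem_graphFill hv

theorem Xinv_hg_eq (h : IsRelaxedWave ω hf hg f g α) (hω : IsAveragingKernel ω) (hhg : MemX hg)
    {u : ℝ} (hu : u ∈ Ioo (0 : ℝ) 1) : Xinv hg u = conv f ω (quantile g u) :=
  hhg.Xinv_eq_comp_quantile h.isProfile_g (hω.continuous_conv h.isProfile_f.memPsi)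
    (hω.conv h.isProfile_f.memPsi).mem_Icc h.g_mem_graphFill hu

theorem Pot_nonpos (h : IsRelaxedWave ω hf hg f g α) (hω : IsAveragingKernel ω)
    (hW : HasRadius ω W) (hhf : MemX hf) (hhg : MemX hg) (hα : α ≤ 0) (hp : p ∈ Icc (0 : ℝ) 1)
    (hq : q ∈ Icc (0 : ℝ) 1)
    (hfg : ∀ v ∈ Ioo 0 p, ∀ u ∈ Ioo q 1, quantile f v + α - quantile g u ≤ -W)
    (hgf : ∀ u ∈ Ioo 0 q, ∀ v ∈ Ioo p 1, quantile g u - quantile f v ≤ -W) :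
    Pot hf hg q p ≤ 0 := by
  have hpot := hω.Pot_le (hf := hf) (hg := hg) (η := α) h.isProfile_f h.isProfile_g hp.1 le_rfl
    hp.2 hq.1 le_rfl hq.2 le_rfl
    (fun v hv => (h.Xinv_hf_eq hω hhf ⟨hv.1, hv.2.trans_le hp.2⟩).le)
    (fun u hu => (h.Xinv_hg_eq hω hhg ⟨hu.1, hu.2.trans_le hq.2⟩).le)
    (fun v hv u hu => (hW.kernelCdf_eq_zero (hfg v hv u hu)).le)
    (fun u hu v hv => (hW.kernelCdf_eq_zero (hgf u hu v hv)).le)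
  simpa [max_eq_right hα] using hpot

/- The point `(q, p)` splits the wave into a left and a right half that do not interact. -/
theorem Pot_nonpos_of_separated (h : IsRelaxedWave ω hf hg f g α) (hω : IsAveragingKernel ω)
    (hW : HasRadius ω W) (hhf : MemX hf) (hhg : MemX hg) (hα : α ≤ 0)
    (hp : p ∈ Icc (f x₂) (f x₁)) (hq : q ∈ Icc (g y₁) (g y₂)) (hxy : x₁ + α + W ≤ y₁)
    (hyx : y₂ + W ≤ x₂) : Pot hf hg q p ≤ 0 := by
  have hf_mem := h.isProfile_f.memPsi
  have hg_mem := h.isProfile_g.memPsi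
  refine h.Pot_nonpos hω hW hhf hhg hα
    ⟨(hf_mem.nonneg x₂).trans hp.1, hp.2.trans (hf_mem.le_one x₁)⟩
    ⟨(hg_mem.nonneg y₁).trans hq.1, hq.2.trans (hg_mem.le_one y₂)⟩ (fun v hv u hu => ?_)
    fun u hu v hv => ?_
  · have hle := h.isProfile_f.quantile_le_of_mem_Ioo ⟨hv.1, hv.2.trans_le hp.2⟩
    have hge := h.isProfile_g.le_quantile_of_mem_Ioo ⟨hq.1.trans_lt hu.1, hu.2⟩
    linarith
  · have hle := h.isProfile_g.quantile_le_of_mem_Ioo ⟨hu.1, hu.2.trans_le hq.2⟩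
    have hge := h.isProfile_f.le_quantile_of_mem_Ioo ⟨hp.1.trans_lt hv.1, hv.2⟩
    linarith

theorem lt_of_eqOn_Ioo (h : IsRelaxedWave ω hf hg f g α) (hω : IsAveragingKernel ω)
    (hW : HasRadius ω W) (H : CrossingLevel hf hg v₀) (hα : α ≤ 0) (hst : 2 * W < t - s)
    (hr : 0 < r) (hfr : ∀ x ∈ Ioo s t, f x = r) : v₀ < r := by
  by_contra! hle
  have hpos := hW.radius_pos
  have hleft := hfr ((s + t) / 2 - W) ⟨by linarith, by linarith⟩
  have hright := hfr ((s + t) / 2 + W) ⟨by linarith, by linarith⟩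
  refine (H.Pot_pos (h.isProfile_g.memPsi.mem_Icc ((s + t) / 2)) ⟨hr, hle⟩).not_ge ?_
  exact h.Pot_nonpos_of_separated hω hW H.memX_f H.memX_g hα ⟨hright.le, hleft.ge⟩
    ⟨le_rfl, le_rfl⟩ (by linarith) le_rfl

theorem not_isCrossing_of_eqOn_Ioo (h : IsRelaxedWave ω hf hg f g α) (hω : IsAveragingKernel ω)
    (hW : HasRadius ω W) (H : CrossingLevel hf hg v₀) (hα : α ≤ 0) (hst : s < t)
    (hr : r ∈ Ioo (0 : ℝ) 1) (hfr : ∀ x ∈ Icc s t, f x = r)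
    (hgc : ∀ x ∈ Ioo (s + α - W) (t + α + W), g x = c) : ¬IsCrossing hf hg c r := by
  intro hcross
  have hpos := hW.radius_pos
  have hleft := hgc (s + α + W) ⟨by linarith, by linarith⟩
  have hright := hgc (t + α - W) ⟨by linarith, by linarith⟩
  refine (H.Pot_pos_of_isCrossing hcross hr).not_ge ?_
  exact h.Pot_nonpos_of_separated hω hW H.memX_f H.memX_g hα
    ⟨(hfr t (right_mem_Icc.2 hst.le)).le, (hfr s (left_mem_Icc.2 hst.le)).ge⟩
    ⟨hleft.le, hright.ge⟩ le_rfl (by linarith)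

end IsRelaxedWave

namespace CompositionLimit

variable {ω h E k : ℝ → ℝ} {En kn y : ℕ → ℝ → ℝ} {a b e β W : ℝ}

theorem stabilizesOn_of_hasRadius
    (L : CompositionLimit h E (fun x => conv k ω (x + β)) En fun n x => conv (kn n) ω (y n x))
    (hω : IsAveragingKernel ω) (hW : HasRadius ω W) (hk : MemPsi k) (hkn : ∀ n, MemPsi (kn n))
    (hy : ∀ x, Tendsto (fun n => y n x) atTop (𝓝 (x + β))) (h₀ : rm h 0 = 0) (h₁ : lm h 1 = 1)
    (hmem : ∀ x, E x ∈ graphFill h (conv k ω (x + β))) (he : e ∈ Ioo (0 : ℝ) 1)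
    (hE : ∀ x ∈ Ioo a b, E x = e)
    (hstab : ∀ s t c, a < s → s < t → t < b → c ∈ Ioo (0 : ℝ) 1 → e ∈ graphFill h c →
      (∀ x ∈ Ioo (s + β - W) (t + β + W), k x = c) →
      StabilizesOn kn (Ioo (s + β - W) (t + β + W)) c) : StabilizesOn En (Ioo a b) e := by
  refine L.stabilizesOn hE fun s t has hst htb heq m hm => ?_
  have hes : e ∈ graphFill h (conv k ω (s + β)) := hE s ⟨has, hst.trans htb⟩ ▸ hmem s
  have hflat : ∀ x ∈ Ioo (s + β - W) (t + β + W), k x = conv k ω (s + β) := fun x hx =>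
    hW.eq_conv_of_conv_eq hω hk (by linarith) heq hx
  have hc := mem_Ioo_of_mem_graphFill h₀ h₁ ((hω.conv hk).mem_Icc _) he hes
  exact hW.eventually_conv_eq hω hkn (hstab s t _ has hst htb hc hes hflat)
    ⟨by linarith [hm.1], by linarith [hm.2]⟩ (hy m)

theorem comp_ae_eq
    (L : CompositionLimit h E (fun x => conv k ω (x + β)) En fun n x => conv (kn n) ω (y n x))
    (hω : IsAveragingKernel ω) (hreg : IsRegularKernel ω) (hk : IsProfile k) (hE : MemPsi E)
    (hkn : ∀ n, MemPsi (kn n)) (hy : ∀ x, Tendsto (fun n => y n x) atTop (𝓝 (x + β)))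
    (h₀ : rm h 0 = 0) (h₁ : lm h 1 = 1) (hmem : ∀ x, E x ∈ graphFill h (conv k ω (x + β)))
    (hstab : ∀ W, HasRadius ω W → ∀ s t c, 2 * W < t - s → c ∈ Ioo (0 : ℝ) 1 →
      (∀ x ∈ Ioo s t, k x = c) → StabilizesOn kn (Ioo s t) c) :
    (fun x => h (conv k ω (x + β))) =ᵐ[volume] E := by
  refine L.memX.comp_ae_eq h₀ h₁ hE L.memPsi_w hmem fun s t hst heq hc => ?_
  have hst' : s + β < t + β := add_lt_add_left hst β
  rcases hreg.forall_pos_or_hasRadius with hpos | ⟨W, hW⟩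
  · exact absurd heq (hω.strictMono_conv hpos hk hst').ne
  · obtain ⟨m, hsm, hmt⟩ := exists_between hst
    have hflat : ∀ x ∈ Ioo (s + β - W) (t + β + W), k x = conv k ω (s + β) := fun x hx =>
      hW.eq_conv_of_conv_eq hω hk.memPsi hst' heq hx
    exact ⟨m, ⟨hsm.le, hmt.le⟩, L.eq_of_eventually_eq <| hW.eventually_conv_eq hω hkn
      (hstab W hW _ _ _ (by linarith) hc hflat) ⟨by linarith, by linarith⟩ (hy m)⟩

end CompositionLimit

namespace WaveLimit

variable {ω hf hg f g : ℝ → ℝ} {v₀ α W a b r c : ℝ} {fn gn yn : ℕ → ℝ → ℝ}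

theorem compositionLimit_f (L : WaveLimit ω hf hg v₀ f g α fn gn yn) (hω : IsAveragingKernel ω)
    (hhf : MemX hf) : CompositionLimit hf f (fun x => conv g ω (x + α)) fn
      fun n x => conv (gn n) ω (yn n x) where
  memX := hhf
  memPsi_w := (hω.conv L.isProfile_g.memPsi).comp_add_const α
  memPsi_wn n := ⟨(hω.conv_mono (L.memPsi_gn n)).comp (L.monotone_y n),
    fun _ => (hω.conv (L.memPsi_gn n)).mem_Icc _⟩
  tendsto_E := L.tendsto_f
  tendsto_w x := hω.tendsto_conv L.memPsi_gn L.isProfile_g.memPsi L.tendsto_g (L.tendsto_y x)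
  eventually_eq := L.fn_eq

theorem compositionLimit_g (L : WaveLimit ω hf hg v₀ f g α fn gn yn) (hω : IsAveragingKernel ω)
    (hhg : MemX hg) : CompositionLimit hg g (fun x => conv f ω (x + 0)) gn
      fun n x => conv (fn n) ω x where
  memX := hhg
  memPsi_w := (hω.conv L.isProfile_f.memPsi).comp_add_const 0
  memPsi_wn n := hω.conv (L.memPsi_fn n)
  tendsto_E := L.tendsto_g
  tendsto_w x := hω.tendsto_conv L.memPsi_fn L.isProfile_f.memPsi L.tendsto_f
    (by simpa only [add_zero] using tendsto_const_nhds)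
  eventually_eq x := Eventually.of_forall fun n => L.gn_eq n x

theorem stabilizesOn_f_of (L : WaveLimit ω hf hg v₀ f g α fn gn yn) (hω : IsAveragingKernel ω)
    (H : CrossingLevel hf hg v₀) (hW : HasRadius ω W) (hr : r ∈ Ioo (0 : ℝ) 1)
    (hfr : ∀ x ∈ Ioo a b, f x = r)
    (hstab : ∀ s t c, a < s → s < t → t < b → c ∈ Ioo (0 : ℝ) 1 → r ∈ graphFill hf c →
      (∀ x ∈ Ioo (s + α - W) (t + α + W), g x = c) →
      StabilizesOn gn (Ioo (s + α - W) (t + α + W)) c) : StabilizesOn fn (Ioo a b) r :=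
  (L.compositionLimit_f hω H.memX_f).stabilizesOn_of_hasRadius hω hW L.isProfile_g.memPsi
    L.memPsi_gn L.tendsto_y (H.gap.swap.rm_zero H.memX_g H.memX_f)
    (H.gap.swap.lm_one H.memX_g H.memX_f) L.f_mem_graphFill hr hfr hstab

theorem stabilizesOn_g_of (L : WaveLimit ω hf hg v₀ f g α fn gn yn) (hω : IsAveragingKernel ω)
    (H : CrossingLevel hf hg v₀) (hW : HasRadius ω W) (hc : c ∈ Ioo (0 : ℝ) 1)
    (hgc : ∀ x ∈ Ioo a b, g x = c)
    (hstab : ∀ s t r, a < s → s < t → t < b → r ∈ Ioo (0 : ℝ) 1 → c ∈ graphFill hg r →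
      (∀ x ∈ Ioo (s - W) (t + W), f x = r) → StabilizesOn fn (Ioo (s - W) (t + W)) r) :
    StabilizesOn gn (Ioo a b) c :=
  (L.compositionLimit_g hω H.memX_g).stabilizesOn_of_hasRadius hω hW L.isProfile_f.memPsi
    L.memPsi_fn (fun x => by simpa only [add_zero] using tendsto_const_nhds)
    (H.gap.rm_zero H.memX_f H.memX_g) (H.gap.lm_one H.memX_f H.memX_g)
    (by simpa only [add_zero] using L.g_mem_graphFill) hc hgc
    (by simpa only [add_zero] using hstab)

theorem right_pos_of_eqOn_Ioo (L : WaveLimit ω hf hg v₀ f g α fn gn yn)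
    (hω : IsAveragingKernel ω) (H : CrossingLevel hf hg v₀) (hW : HasRadius ω W)
    (hab : 2 * W < b - a) (hr : 0 < r) (hfr : ∀ x ∈ Ioo a b, f x = r) : 0 < b := by
  have hlt := L.lt_of_eqOn_Ioo hω hW H L.speed_nonpos hab hr hfr
  have hpos := hW.radius_pos
  by_contra! hb
  have hle := L.f_le ((a + b) / 2) (by linarith)
  rw [hfr _ ⟨by linarith, by linarith⟩] at hle
  exact hlt.not_ge hle

/- Instability of a flat piece of `f` propagates through a flat piece of `g` to another flat piece
of `f`. Equal levels would form a crossing point of nonpositive potential and a higher level lies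
too far to the right, so the new piece lies to the left; but the pieces cannot reach the left
half-line. -/
theorem stabilizesOn_f_of_le (L : WaveLimit ω hf hg v₀ f g α fn gn yn) (hω : IsAveragingKernel ω)
    (H : CrossingLevel hf hg v₀) (hW : HasRadius ω W) (k : ℕ) (hb : b ≤ 2 * W * k)
    (hab : 2 * W < b - a) (hr : r ∈ Ioo (0 : ℝ) 1) (hfr : ∀ x ∈ Ioo a b, f x = r) :
    StabilizesOn fn (Ioo a b) r := by
  have hpos := hW.radius_pos
  have hα := L.speed_nonpos
  induction k generalizing a b r with
  | zero =>
    have := L.right_pos_of_eqOn_Ioo hω H hW hab hr.1 hfr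
    simp only [Nat.cast_zero, mul_zero] at hb
    exact absurd hb this.not_ge
  | succ k ih =>
    refine L.stabilizesOn_f_of hω H hW hr hfr fun s t c has hst htb hc hrc hgc =>
      L.stabilizesOn_g_of hω H hW hc hgc fun s' t' r' _ hst' htb' hr' hcr' hfr' => ?_
    have hab_lt : a < b := by linarith
    have hst'_lt : s' - W < t' + W := by linarith
    rcases lt_trichotomy r' r with hlt | rfl | hgt
    · have hleft := le_left_of_eqOn_Ioo L.isProfile_f.memPsi.monotone hst'_lt hab_lt hfr' hfr hlt
      push_cast at hb
      exact ih (by linarith) (by linarith) hr' hfr'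
    · refine absurd ⟨Ioo_subset_Icc_self hc, Ioo_subset_Icc_self hr, hcr', hrc⟩
        (L.not_isCrossing_of_eqOn_Ioo hω hW H hα hst hr (fun x hx => ?_) hgc)
      exact hfr x ⟨has.trans_le hx.1, hx.2.trans_lt htb⟩
    · have hright := le_left_of_eqOn_Ioo L.isProfile_f.memPsi.monotone hab_lt hst'_lt hfr hfr' hgt
      linarith

theorem stabilizesOn_f (L : WaveLimit ω hf hg v₀ f g α fn gn yn) (hω : IsAveragingKernel ω)
    (H : CrossingLevel hf hg v₀) (hW : HasRadius ω W) (hab : 2 * W < b - a)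
    (hr : r ∈ Ioo (0 : ℝ) 1) (hfr : ∀ x ∈ Ioo a b, f x = r) : StabilizesOn fn (Ioo a b) r := by
  have hpos := hW.radius_pos
  obtain ⟨k, hk⟩ := exists_nat_ge (b / (2 * W))
  exact L.stabilizesOn_f_of_le hω H hW k ((div_le_iff₀' (by linarith)).1 hk) hab hr hfr

theorem stabilizesOn_g (L : WaveLimit ω hf hg v₀ f g α fn gn yn) (hω : IsAveragingKernel ω)
    (H : CrossingLevel hf hg v₀) (hW : HasRadius ω W) (hc : c ∈ Ioo (0 : ℝ) 1)
    (hgc : ∀ x ∈ Ioo a b, g x = c) : StabilizesOn gn (Ioo a b) c :=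
  L.stabilizesOn_g_of hω H hW hc hgc fun _ _ _ _ hst _ hr _ hfr =>
    L.stabilizesOn_f hω H hW (by linarith) hr hfr

theorem hf_comp_ae_eq (L : WaveLimit ω hf hg v₀ f g α fn gn yn) (hω : IsAveragingKernel ω)
    (hreg : IsRegularKernel ω) (H : CrossingLevel hf hg v₀) :
    (fun x => hf (conv g ω (x + α))) =ᵐ[volume] f :=
  (L.compositionLimit_f hω H.memX_f).comp_ae_eq hω hreg L.isProfile_g L.isProfile_f.memPsi
    L.memPsi_gn L.tendsto_y (H.gap.swap.rm_zero H.memX_g H.memX_f)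
    (H.gap.swap.lm_one H.memX_g H.memX_f) L.f_mem_graphFill
    fun _ hW _ _ _ _ hc hgc => L.stabilizesOn_g hω H hW hc hgc

theorem hg_comp_ae_eq (L : WaveLimit ω hf hg v₀ f g α fn gn yn) (hω : IsAveragingKernel ω)
    (hreg : IsRegularKernel ω) (H : CrossingLevel hf hg v₀) :
    (fun x => hg (conv f ω x)) =ᵐ[volume] g := by
  simpa only [add_zero] using
    (L.compositionLimit_g hω H.memX_g).comp_ae_eq hω hreg L.isProfile_f L.isProfile_g.memPsi
      L.memPsi_fn (fun x => by simpa only [add_zero] using tendsto_const_nhds)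
      (H.gap.rm_zero H.memX_f H.memX_g) (H.gap.lm_one H.memX_f H.memX_g)
      (by simpa only [add_zero] using L.g_mem_graphFill)
      fun _ hW _ _ _ hst hr hfr => L.stabilizesOn_f hω H hW hst hr hfr

end WaveLimit

/-- A spatial wave: profiles `F`, `G` for which `f^t(x) = F (x - α * t)` and
`g^t(x) = G (x - α * t)` solve the spatially coupled recursion. -/
structure IsWave (ω hf hg F G : ℝ → ℝ) (α : ℝ) : Prop where
  isProfile_F : IsProfile F
  isProfile_G : IsProfile G
  G_eq : ∀ x, G x = hg (conv F ω x)
  F_eq : ∀ x, F x = hf (conv G ω (x + α))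

theorem MemX.isProfile_comp {h w : ℝ → ℝ} (hh : MemX h) (h₀ : rm h 0 = 0) (h₁ : lm h 1 = 1)
    (hw : IsProfile w) : IsProfile fun x => h (w x) where
  memPsi := hh.comp_memPsi hw.memPsi
  interpolates :=
    have hmem (x : ℝ) : h (w x) ∈ graphFill h (w x) :=
      hh.self_mem_graphFill (hw.memPsi.mem_Icc x)
    ⟨hh.tendsto_zero_of_mem_graphFill h₀ hw.memPsi.mem_Icc hw.interpolates.1 hmem,
      hh.tendsto_one_of_mem_graphFill h₁ hw.memPsi.mem_Icc hw.interpolates.2 hmem⟩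

theorem IsAveragingKernel.isProfile_conv {ω f : ℝ → ℝ} (hω : IsAveragingKernel ω)
    (hf : IsProfile f) : IsProfile (conv f ω) :=
  ⟨hω.conv hf.memPsi, hω.tendsto_conv_atBot hf.memPsi hf.interpolates.1,
    hω.tendsto_conv_atTop hf.memPsi hf.interpolates.2⟩

theorem IsProfile.comp_add_const {f : ℝ → ℝ} (hf : IsProfile f) (β : ℝ) :
    IsProfile fun x => f (x + β) :=
  ⟨hf.memPsi.comp_add_const β,
    hf.interpolates.1.comp (tendsto_atBot_add_const_right _ β tendsto_id),
    hf.interpolates.2.comp (tendsto_atTop_add_const_right _ β tendsto_id)⟩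

theorem WaveLimit.isWave {ω hf hg f g : ℝ → ℝ} {v₀ α : ℝ} {fn gn yn : ℕ → ℝ → ℝ}
    (L : WaveLimit ω hf hg v₀ f g α fn gn yn) (hω : IsAveragingKernel ω)
    (hreg : IsRegularKernel ω) (H : CrossingLevel hf hg v₀) :
    IsWave ω hf hg (fun x => hf (conv g ω (x + α))) (fun x => hg (conv f ω x)) α where
  isProfile_F := H.memX_f.isProfile_comp (H.gap.swap.rm_zero H.memX_g H.memX_f)
    (H.gap.swap.lm_one H.memX_g H.memX_f) ((hω.isProfile_conv L.isProfile_g).comp_add_const α)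
  isProfile_G := H.memX_g.isProfile_comp (H.gap.rm_zero H.memX_f H.memX_g)
    (H.gap.lm_one H.memX_f H.memX_g) (hω.isProfile_conv L.isProfile_f)
  G_eq x := by rw [conv_congr_ae ω (L.hf_comp_ae_eq hω hreg H)]
  F_eq x := by rw [conv_congr_ae ω (L.hg_comp_ae_eq hω hreg H)]

/-! ### Speed of a wave -/

theorem HasRadius.le_neg_or_le_of_kernelCdf_eq {ω : ℝ → ℝ} {W a b : ℝ} (hW : HasRadius ω W)
    (hω : IsAveragingKernel ω) (hab : a < b) (h : kernelCdf ω a = kernelCdf ω b) :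
    b ≤ -W ∨ W ≤ a := by
  by_contra! hcon
  have hlt : max a (-W) < min b W :=
    max_lt (lt_min hab hcon.2) (lt_min hcon.1 (neg_lt_self hW.radius_pos))
  have hstrict : kernelCdf ω (max a (-W)) < kernelCdf ω (min b W) :=
    hω.kernelCdf_lt hlt fun x hx => hW.pos x
      (abs_lt.2 ⟨(le_max_right _ _).trans_lt hx.1, hx.2.trans_le (min_le_right _ _)⟩)
  have ha := hω.kernelCdf_mono (le_max_left a (-W))
  have hb := hω.kernelCdf_mono (min_le_left b W)
  linarith

theorem IsAveragingKernel.ae_kernelCdf_eq_of_interaction_eq {ω f g : ℝ → ℝ} {η η' : ℝ}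
    (hω : IsAveragingKernel ω) (hf : IsProfile f) (hg : IsProfile g) (hη : η ≤ η')
    (h : interaction ω f g η 1 1 = interaction ω f g η' 1 1) :
    ∀ᵐ v ∂volume.restrict (Ioo (0 : ℝ) 1), ∀ᵐ u ∂volume.restrict (Ioo (0 : ℝ) 1),
      kernelCdf ω (quantile f v + η - quantile g u)
        = kernelCdf ω (quantile f v + η' - quantile g u) := by
  refine Measure.ae_ae_of_ae_prod (p := fun z : ℝ × ℝ =>
    kernelCdf ω (quantile f z.1 + η - quantile g z.2)
      = kernelCdf ω (quantile f z.1 + η' - quantile g z.2)) ?_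
  rw [Measure.prod_restrict]
  exact (integral_eq_iff_of_ae_le (hω.integrableOn_interaction hf hg η le_rfl le_rfl)
    (hω.integrableOn_interaction hf hg η' le_rfl le_rfl)
    (.of_forall fun _ => hω.kernelCdf_mono (by gcongr))).1 h

theorem IsAveragingKernel.integral_Xinv_eq_interaction {ω h f g : ℝ → ℝ} {η : ℝ}
    (hω : IsAveragingKernel ω) (hf : IsProfile f) (hg : IsProfile g)
    (hinv : ∀ v ∈ Ioo (0 : ℝ) 1, Xinv h v = conv g ω (quantile f v + η)) :
    ∫ v in (0 : ℝ)..1, Xinv h v = interaction ω f g η 1 1 := by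
  rw [intervalIntegral.integral_of_le zero_le_one, integral_Ioc_eq_integral_Ioo,
    hω.interaction_eq_integral hf hg η le_rfl le_rfl]
  exact setIntegral_congr_fun measurableSet_Ioo fun v hv =>
    (hinv v hv).trans (hω.conv_eq_integral_kernelCdf hg _)

namespace IsRelaxedWave

variable {ω hf hg f g : ℝ → ℝ} {α v₀ v W : ℝ}

theorem Agap_eq (h : IsRelaxedWave ω hf hg f g α) (hω : IsAveragingKernel ω) (hhf : MemX hf)
    (hhg : MemX hg) : Agap hf hg = interaction ω f g α 1 1 - interaction ω f g 0 1 1 := by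
  have hone : (1 : ℝ) ∈ Icc (0 : ℝ) 1 := ⟨zero_le_one, le_rfl⟩
  have hsymm := hω.interaction_add_interaction h.isProfile_f h.isProfile_g hone hone
  rw [Agap, Pot, hω.integral_Xinv_eq_interaction h.isProfile_f h.isProfile_g
      fun v hv => h.Xinv_hf_eq hω hhf hv,
    hω.integral_Xinv_eq_interaction (η := 0) h.isProfile_g h.isProfile_f
      fun u hu => by rw [add_zero, h.Xinv_hg_eq hω hhg hu]]
  linarith

theorem Agap_nonpos (h : IsRelaxedWave ω hf hg f g α) (hω : IsAveragingKernel ω) (hhf : MemX hf)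
    (hhg : MemX hg) (hα : α ≤ 0) : Agap hf hg ≤ 0 := by
  rw [h.Agap_eq hω hhf hhg, sub_nonpos]
  exact hω.interaction_mono h.isProfile_f h.isProfile_g le_rfl le_rfl hα

theorem neg_Agap_le (h : IsRelaxedWave ω hf hg f g α) (hω : IsAveragingKernel ω) (hhf : MemX hf)
    (hhg : MemX hg) (hα : α ≤ 0) : -Agap hf hg ≤ kerSup ω * -α := by
  have hone : (1 : ℝ) ∈ Icc (0 : ℝ) 1 := ⟨zero_le_one, le_rfl⟩
  have hlip := hω.interaction_sub_le h.isProfile_f h.isProfile_g hone hone hα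
  rwa [h.Agap_eq hω hhf hhg, neg_sub, ← zero_sub α]

/- If almost no level of `g` interacts differently with the level `v` of `f` after the shift, no
level of `g` lies within distance `W` of `quantile f v`, so the wave splits there. -/
theorem Pot_nonpos_of_ae_kernelCdf_eq (h : IsRelaxedWave ω hf hg f g α) (hω : IsAveragingKernel ω)
    (hW : HasRadius ω W) (hhf : MemX hf) (hhg : MemX hg) (hα : α < 0) (hv : v ∈ Ioo (0 : ℝ) 1)
    (heq : ∀ᵐ u ∂volume.restrict (Ioo (0 : ℝ) 1), kernelCdf ω (quantile f v + α - quantile g u)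
      = kernelCdf ω (quantile f v + 0 - quantile g u)) :
    Pot hf hg (g (quantile f v)) v ≤ 0 := by
  have hq := h.isProfile_g.memPsi.mem_Icc (quantile f v)
  have hmono_f := h.isProfile_f.monotoneOn_quantile
  have hmono_g := h.isProfile_g.monotoneOn_quantile
  have hpos := hW.radius_pos
  have hgood {a b : ℝ} (ha : 0 ≤ a) (hab : a < b) (hb : b ≤ 1) : ∃ u ∈ Ioo a b,
      quantile f v + 0 - quantile g u ≤ -W ∨ W ≤ quantile f v + α - quantile g u := by
    obtain ⟨u, hu, hequ⟩ := exists_mem_Ioo_of_ae_restrict hab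
      (ae_restrict_of_ae_restrict_of_subset (Ioo_subset_Ioo ha hb) heq)
    exact ⟨u, hu, hW.le_neg_or_le_of_kernelCdf_eq hω (by linarith) hequ⟩
  refine h.Pot_nonpos hω hW hhf hhg hα.le ⟨hv.1.le, hv.2.le⟩ hq (fun v' hv' u hu => ?_)
    fun u hu v' hv' => ?_
  · obtain ⟨u', hu', hfar⟩ := hgood hq.1 hu.1 hu.2.le
    have hu'_mem : u' ∈ Ioo (0 : ℝ) 1 := ⟨hq.1.trans_lt hu'.1, hu'.2.trans hu.2⟩
    have hright := h.isProfile_g.le_quantile_of_mem_Ioo ⟨hu'.1, hu'_mem.2⟩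
    have hgu := hmono_g hu'_mem ⟨hu'_mem.1.trans hu'.2, hu.2⟩ hu'.2.le
    have hfv := hmono_f ⟨hv'.1, hv'.2.trans hv.2⟩ hv hv'.2.le
    rcases hfar with hfar | hfar <;> linarith
  · obtain ⟨u', hu', hfar⟩ := hgood hu.1.le hu.2 hq.2
    have hu'_mem : u' ∈ Ioo (0 : ℝ) 1 := ⟨hu.1.trans hu'.1, hu'.2.trans_le hq.2⟩
    have hleft := h.isProfile_g.quantile_le_of_mem_Ioo ⟨hu'_mem.1, hu'.2⟩
    have hgu := hmono_g ⟨hu.1, hu'.1.trans hu'_mem.2⟩ hu'_mem hu'.1.le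
    have hfv := hmono_f hv ⟨hv.1.trans hv'.1, hv'.2⟩ hv'.1.le
    rcases hfar with hfar | hfar <;> linarith

theorem Agap_ne_zero (h : IsRelaxedWave ω hf hg f g α) (hω : IsAveragingKernel ω)
    (hreg : IsRegularKernel ω) (H : CrossingLevel hf hg v₀) (hα : α < 0) : Agap hf hg ≠ 0 := by
  intro hA
  rw [h.Agap_eq hω H.memX_f H.memX_g, sub_eq_zero] at hA
  obtain ⟨v, hv, heq⟩ := exists_mem_Ioo_of_ae_restrict H.mem_Ioo.1
    (ae_restrict_of_ae_restrict_of_subset (Ioo_subset_Ioo_right H.mem_Ioo.2.le)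
      (hω.ae_kernelCdf_eq_of_interaction_eq h.isProfile_f h.isProfile_g hα.le hA))
  rcases hreg.forall_pos_or_hasRadius with hpos | ⟨W, hW⟩
  · obtain ⟨u, -, hequ⟩ := exists_mem_Ioo_of_ae_restrict zero_lt_one heq
    exact (hω.kernelCdf_lt (by linarith) fun x _ => hpos x).ne hequ
  · exact (H.Pot_pos (h.isProfile_g.memPsi.mem_Icc _) ⟨hv.1, hv.2.le⟩).not_ge
      (h.Pot_nonpos_of_ae_kernelCdf_eq hω hW H.memX_f H.memX_g hα
        ⟨hv.1, hv.2.trans H.mem_Ioo.2⟩ heq)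

theorem sign_eq (h : IsRelaxedWave ω hf hg f g α) (hω : IsAveragingKernel ω)
    (hreg : IsRegularKernel ω) (H : CrossingLevel hf hg v₀) (hα : α ≤ 0) :
    Real.sign α = Real.sign (Agap hf hg) := by
  have hA := h.Agap_nonpos hω H.memX_f H.memX_g hα
  rcases hα.lt_or_eq with hneg | rfl
  · rw [Real.sign_of_neg hneg, Real.sign_of_neg (hA.lt_of_ne (h.Agap_ne_zero hω hreg H hneg))]
  · rw [h.Agap_eq hω H.memX_f H.memX_g, sub_self]

theorem abs_Agap_div_le (h : IsRelaxedWave ω hf hg f g α) (hω : IsAveragingKernel ω)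
    (hhf : MemX hf) (hhg : MemX hg) (hα : α ≤ 0) : |Agap hf hg| / kerSup ω ≤ |α| := by
  rw [abs_of_nonpos (h.Agap_nonpos hω hhf hhg hα), abs_of_nonpos hα]
  refine div_le_of_le_mul₀ kerSup_nonneg (neg_nonneg.2 hα) ?_
  rw [mul_comm]
  exact h.neg_Agap_le hω hhf hhg hα

end IsRelaxedWave

theorem IsWave.mirror {ω hf hg F G : ℝ → ℝ} {α : ℝ} (h : IsWave ω (dual hf) (dual hg) F G α)
    (hω : IsAveragingKernel ω) : IsWave ω hf hg (mirror F) (mirror G) (-α) where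
  isProfile_F := h.isProfile_F.mirror
  isProfile_G := h.isProfile_G.mirror
  G_eq x := by
    rw [hω.conv_mirror h.isProfile_F.memPsi]
    simp only [_root_.mirror, h.G_eq, dual, sub_sub_cancel]
  F_eq x := by
    rw [hω.conv_mirror h.isProfile_G.memPsi]
    simp only [_root_.mirror, h.F_eq, dual, sub_sub_cancel, neg_add, neg_neg]

theorem CrossingLevel.exists_isWave_of_frequently {ω hf hg : ℝ → ℝ} {v₀ : ℝ} {δ K c : ℕ → ℝ}
    {fn gn : ℕ → ℝ → ℝ} (H : CrossingLevel hf hg v₀) (hω : IsAveragingKernel ω)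
    (hreg : IsRegularKernel ω)
    (happrox : ∀ n, Approximant ω hf hg v₀ (δ n) (K n) (c n) (fn n) (gn n))
    (hδ : Tendsto δ atTop (𝓝 0)) (hδK : Tendsto (fun n => δ n * K n) atTop atTop)
    (hc : ∃ᶠ n in atTop, c n ≤ 0) :
    ∃ F G α, IsWave ω hf hg F G α ∧ Real.sign α = Real.sign (Agap hf hg) ∧
      |Agap hf hg| / kerSup ω ≤ |α| := by
  obtain ⟨φ, hφ, hcφ⟩ := extraction_of_frequently_atTop hc
  obtain ⟨f, g, α, _, _, _, L⟩ := H.exists_waveLimit hω (fun n => happrox (φ n)) hcφ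
    (hδ.comp hφ.tendsto_atTop) (hδK.comp hφ.tendsto_atTop)
  exact ⟨_, _, α, L.isWave hω hreg H, L.sign_eq hω hreg H L.speed_nonpos,
    L.abs_Agap_div_le hω H.memX_f H.memX_g L.speed_nonpos⟩

theorem CrossingLevel.exists_approximant_seq {ω hf hg : ℝ → ℝ} {v₀ : ℝ}
    (H : CrossingLevel hf hg v₀) (hω : IsAveragingKernel ω) :
    ∃ (δ K c : ℕ → ℝ) (fn gn : ℕ → ℝ → ℝ),
      (∀ n, Approximant ω hf hg v₀ (δ n) (K n) (c n) (fn n) (gn n)) ∧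
      Tendsto δ atTop (𝓝 0) ∧ Tendsto (fun n => δ n * K n) atTop atTop := by
  have happrox (n : ℕ) := exists_approximant hω H.memX_f H.memX_g H.mem_Ioo
    (Nat.one_div_pos_of_nat (α := ℝ) (n := n)) (show 0 < ((n : ℝ) + 1) ^ 2 by positivity)
  choose c fn gn happrox using happrox
  refine ⟨_, _, c, fn, gn, happrox, tendsto_one_div_add_atTop_nhds_zero_nat, ?_⟩
  have hprod (n : ℕ) : (n : ℝ) + 1 = 1 / ((n : ℝ) + 1) * ((n : ℝ) + 1) ^ 2 := by field_simp
  exact (tendsto_atTop_add_const_right _ 1 tendsto_natCast_atTop_atTop).congr hprod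

/-- **Existence of continuum spatial waves.** -/
theorem continuum_spatial_waves_exist
    (ω hf hg : ℝ → ℝ)
    (hω : IsAveragingKernel ω) (hreg : IsRegularKernel ω)
    (hhf : MemX hf) (hhg : MemX hg)
    (hgap : StrictPosGap hf hg) :
    ∃ F G : ℝ → ℝ, ∃ α : ℝ,
      MemPsi F ∧ MemPsi G ∧ Interpolates F 0 1 ∧ Interpolates G 0 1 ∧
      Real.sign α = Real.sign (Agap hf hg) ∧
      |Agap hf hg| / kerSup ω ≤ |α| ∧
      (∀ x, G x = hg (conv F ω x)) ∧
      (∀ x, F x = hf (conv G ω (x + α))) := by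
  suffices hwave : ∃ F G α, IsWave ω hf hg F G α ∧ Real.sign α = Real.sign (Agap hf hg) ∧
      |Agap hf hg| / kerSup ω ≤ |α| by
    obtain ⟨F, G, α, w, hsign, hspeed⟩ := hwave
    exact ⟨F, G, α, w.isProfile_F.memPsi, w.isProfile_G.memPsi, w.isProfile_F.interpolates,
      w.isProfile_G.interpolates, hsign, hspeed, w.G_eq, w.F_eq⟩
  obtain ⟨v₀, H⟩ := hgap.exists_crossingLevel hhf hhg
  obtain ⟨δ, K, c, fn, gn, happrox, hδ, hδK⟩ := H.exists_approximant_seq hω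
  have hc : ∃ᶠ n in atTop, c n ≤ 0 ∨ 0 ≤ c n := .of_forall fun n => le_total (c n) 0
  rcases frequently_or_distrib.1 hc with hc | hc
  · exact H.exists_isWave_of_frequently hω hreg happrox hδ hδK hc
  · obtain ⟨F, G, α, w, hsign, hspeed⟩ := H.dual.exists_isWave_of_frequently hω hreg
      (fun n => (happrox n).mirror hω) hδ hδK (hc.mono fun n => neg_nonpos.2)
    rw [Agap_dual hhf hhg] at hsign hspeed
    refine ⟨mirror F, mirror G, -α, w.mirror hω, ?_, by rwa [abs_neg, ← abs_neg (Agap hf hg)]⟩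
    rw [Real.sign_neg, hsign, Real.sign_neg, neg_neg]
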